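/- Let G be a finite subgroup of GL_n(ℂ) such that every group homomorphism G → ℂ^× is trivial (G has no non-trivial characters). Then M_G ≤ 4n², i.e. there exists a nonzero homogeneous G-invariant polynomial in ℂ[x_1,…,x_n] of degree d with 0 < d ≤ 4n². -/

import Mathlib

open MvPolynomial Matrix

/-- The action of `g ∈ GL_n(ℂ)` on polynomials: `(g · f)(v) = f(g⁻¹ v)`. -/
noncomputable def glAct {n : ℕ} (g : GL (Fin n) ℂ)
    (f : MvPolynomial (Fin n) ℂ) : MvPolynomial (Fin n) ℂ :=
  aeval (fun i => ∑ j, ((g⁻¹ : GL (Fin n) ℂ) : Matrix (Fin n) (Fin n) ℂ) i j • X j) f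

/-!
It suffices to find, by induction on `n`, a nonzero homogeneous semi-invariant of degree at most
`4n²` for every finite linear group of degree `n`: without characters, it is invariant. Rescale
the group to determinant one and take a prime `2n + 1 < p ≤ 4n + 1`.

If `p ∤ |G|`, choose coordinates `xᵢ` in which `G` is integral over a valuation ring above `p`.
Then `∑_g ∏ᵢ (xᵢ ∘ g) ^ (p - 1)` is invariant of degree `n (p - 1) ≤ 4n²`. It is nonzero because,
modulo `p` and the `p`-th powers of the variables, the summand at `g` is
`det(g) ^ (p - 1) ∏ᵢ xᵢ ^ (p - 1)`, so that the sum is `|G| ∏ᵢ xᵢ ^ (p - 1)`.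

If `p ∣ |G|`, the `p`-elements commute by a theorem of Feit and Thompson, as `p > 2n + 1`. So they
form a nontrivial normal abelian `p`-subgroup, which is not scalar since its determinants are one
and `p ∤ n`. One of its character spaces has dimension `0 < m < n`, and its `r` translates under
`G` are independent. A semi-invariant of degree `d ≤ 4m²` of its stabilizer yields, by
multiplication over the translates, one of `G` of degree `r d ≤ 4 (r m)² ≤ 4n²`.

For the Feit–Thompson theorem, induction reduces to an irreducible group whose Sylow `p`-subgroup
`P` is abelian and meets its other conjugates trivially. The relative trace from the normalizer of
`P` of an element of the group order acts on the parts belonging to characters of `P` with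
eigenvalues congruent to those of the element modulo `|P|`, up to the denominators of the
projections onto these parts. On `End V` this separates the trivial `P`-part from the others, which
forces the conjugates of elements of `P` to commute with `P`.
-/

namespace Thompson

section Valuation

variable {K : Type*} [Field K]

lemma exists_valuationSubring_natCast_lt_one [CharZero K] (p : ℕ) [hp : Fact p.Prime] :
    ∃ O : ValuationSubring K, O.valuation (p : K) < 1 := by
  let A : Subring K := (Int.castRingHom K).range
  have span_ne_top : Ideal.span {(p : A)} ≠ ⊤ := by
    rw [Ne, Ideal.eq_top_iff_one, Ideal.mem_span_singleton]
    rintro ⟨⟨_, m, rfl⟩, hm⟩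
    have hm' : (1 : K) = p * (m : K) := by simpa using congrArg Subtype.val hm
    have hdvd : (p : ℤ) ∣ 1 := ⟨m, by exact_mod_cast hm'⟩
    exact hp.out.one_lt.ne' (Nat.dvd_one.mp (by exact_mod_cast hdvd))
  obtain ⟨O, -, hO⟩ := Ideal.image_subset_nonunits_valuationSubring _ span_ne_top
  exact ⟨O, O.mem_nonunits_iff.mp (hO ⟨p, Ideal.subset_span rfl, rfl⟩)⟩

variable (O : ValuationSubring K)

lemma valuation_natCast_eq_one {p m : ℕ} (hp : O.valuation (p : K) < 1) (h : m.Coprime p) :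
    O.valuation (m : K) = 1 := by
  have intCast_le (n : ℤ) : O.valuation (n : K) ≤ 1 :=
    (O.valuation_le_one_iff _).mpr (intCast_mem O n)
  refine le_antisymm (by exact_mod_cast intCast_le m) (not_lt.mp fun hm => ?_)
  obtain ⟨a, b, hab⟩ := Nat.isCoprime_iff_coprime.mpr h
  have bezout : (m : K) * a + p * b = 1 := by
    rw [mul_comm, mul_comm (p : K)]; exact_mod_cast congrArg (Int.cast (R := K)) hab
  have one_lt_one : O.valuation (1 : K) < 1 := by
    rw [← bezout]
    refine Valuation.map_add_lt _ ?_ ?_ <;> rw [map_mul]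
    exacts [mul_lt_one_of_lt_of_le hm (intCast_le a), mul_lt_one_of_lt_of_le hp (intCast_le b)]
  simp at one_lt_one

lemma valuation_eq_one_of_pow_eq_one {z : K} {m : ℕ} (hm : m ≠ 0) (h : z ^ m = 1) :
    O.valuation z = 1 :=
  (pow_eq_one_iff.mp (by rw [← map_pow, h, map_one])).resolve_right hm

lemma valuation_one_sub_pow_le {z : K} (h : O.valuation z = 1) (i : ℕ) :
    O.valuation (1 - z ^ i) ≤ O.valuation (1 - z) := by
  rw [← mul_neg_geom_sum, map_mul]
  exact mul_le_of_le_one_right' (Valuation.map_sum_le _ fun j _ => by rw [map_pow, h, one_pow])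

lemma valuation_one_sub_eq {n : ℕ} [NeZero n] {ζ ξ : K} (hζ : IsPrimitiveRoot ζ n)
    (hξ : IsPrimitiveRoot ξ n) : O.valuation (1 - ξ) = O.valuation (1 - ζ) := by
  have hle {z w : K} (hz : IsPrimitiveRoot z n) (hw : IsPrimitiveRoot w n) :
      O.valuation (1 - w) ≤ O.valuation (1 - z) := by
    obtain ⟨i, -, rfl⟩ := hz.eq_pow_of_pow_eq_one hw.pow_eq_one
    exact valuation_one_sub_pow_le O
      (valuation_eq_one_of_pow_eq_one O (NeZero.ne n) hz.pow_eq_one) i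
  exact le_antisymm (hle hζ hξ) (hle hξ hζ)

lemma valuation_one_sub_pow_pred {p : ℕ} [hp : Fact p.Prime] {ζ : K} (h : IsPrimitiveRoot ζ p) :
    O.valuation (1 - ζ) ^ (p - 1) = O.valuation (p : K) := by
  have : NeZero p := ⟨hp.out.ne_zero⟩
  obtain ⟨n, rfl⟩ : ∃ n, p = n + 1 := ⟨p - 1, (Nat.succ_pred_prime hp.out).symm⟩
  have prod_eq := h.prod_one_sub_pow_eq_order
  rw [Nat.cast_succ, ← prod_eq, map_prod, Finset.prod_congr rfl
    (g := fun _ => O.valuation (1 - ζ)), Finset.prod_const, Finset.card_range,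
    Nat.add_sub_cancel]
  intro i hi
  refine valuation_one_sub_eq O h (h.pow_of_coprime _ ?_)
  have := Finset.mem_range.mp hi
  exact (Nat.coprime_of_lt_prime (by omega) (by omega) hp.out).symm

end Valuation

section CharIdem

variable {k P A : Type*} [Field k] [Group P] [Ring A] [Algebra k A]

/-- The idempotent `|P|⁻¹ ∑ₓ a(x)⁻¹ σ(x)` projecting onto the part of `A` on which `P`, acting by
left multiplication through `σ`, acts by the character `a`. -/
noncomputable def charIdem (σ : P →* A) (a : P →* kˣ) : A :=
  (Nat.card P : k)⁻¹ • ∑ᶠ x, ((a x)⁻¹ : kˣ) • σ x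

variable (σ : P →* A) (a b : P →* kˣ)

lemma charIdem_eq_sum [Fintype P] :
    charIdem σ a = (Nat.card P : k)⁻¹ • ∑ x, ((a x)⁻¹ : kˣ) • σ x := by
  rw [charIdem, finsum_eq_sum_of_fintype]

variable [Finite P]

lemma charIdem_comp_mul {Q : Type*} [Group Q] [Finite Q] (ρ : Q →* A) (τ : P ≃* Q)
    (b : Q →* kˣ) {T : A} (h : ∀ x, T * σ x = ρ (τ x) * T) :
    T * charIdem σ (b.comp τ) = charIdem ρ b * T := by
  cases nonempty_fintype P
  cases nonempty_fintype Q
  simp only [charIdem_eq_sum, mul_smul_comm, smul_mul_assoc, Finset.mul_sum, Finset.sum_mul,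
    Nat.card_congr τ.toEquiv, h]
  congr 1
  exact Fintype.sum_equiv τ.toEquiv _ _ fun x => rfl

variable {σ} in
lemma commute_charIdem {T : A} (h : ∀ x, Commute T (σ x)) : Commute T (charIdem σ a) :=
  charIdem_comp_mul σ σ (.refl P) a fun x => (h x).eq

lemma map_mul_charIdem (x : P) : σ x * charIdem σ a = (a x : k) • charIdem σ a := by
  cases nonempty_fintype P
  rw [charIdem_eq_sum, mul_smul_comm, smul_comm]
  congr 1
  rw [Finset.mul_sum, Finset.smul_sum]
  refine Fintype.sum_equiv (Equiv.mulLeft x) _ _ fun y => ?_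
  rw [Equiv.coe_mulLeft, ← Units.smul_def, smul_smul, mul_smul_comm, map_mul, map_mul,
    _root_.mul_inv, mul_inv_cancel_left]

lemma charIdem_mul_map (x : P) : charIdem σ a * σ x = (a x : k) • charIdem σ a := by
  cases nonempty_fintype P
  rw [charIdem_eq_sum, smul_mul_assoc, smul_comm]
  congr 1
  rw [Finset.sum_mul, Finset.smul_sum]
  refine Fintype.sum_equiv (Equiv.mulRight x) _ _ fun y => ?_
  rw [Equiv.coe_mulRight, ← Units.smul_def, smul_smul, smul_mul_assoc, map_mul, map_mul,
    _root_.mul_inv, mul_comm, inv_mul_cancel_right]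

variable {σ a} in
lemma charIdem_mul_of_forall [CharZero k] {T : A} (h : ∀ x, σ x * T = (a x : k) • T) :
    charIdem σ a * T = T := by
  cases nonempty_fintype P
  have hterm (x : P) : ((a x)⁻¹ : kˣ) • (σ x * T) = T := by
    rw [h, ← Units.smul_def, inv_smul_smul]
  rw [charIdem_eq_sum, smul_mul_assoc, Finset.sum_mul]
  simp only [smul_mul_assoc, hterm]
  rw [Finset.sum_const, Finset.card_univ, ← Nat.card_eq_fintype_card,
    ← Nat.cast_smul_eq_nsmul k, inv_smul_smul₀ (Nat.cast_ne_zero.mpr Nat.card_pos.ne')]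

lemma isIdempotentElem_charIdem [CharZero k] : IsIdempotentElem (charIdem σ a) :=
  charIdem_mul_of_forall (map_mul_charIdem σ a)

variable {a b} in
lemma charIdem_mul_charIdem_of_ne (h : a ≠ b) : charIdem σ a * charIdem σ b = 0 := by
  obtain ⟨x, hx⟩ := DFunLike.ne_iff.mp h
  have hsmul : (a x : k) • (charIdem σ a * charIdem σ b) =
      (b x : k) • (charIdem σ a * charIdem σ b) := by
    rw [← smul_mul_assoc, ← charIdem_mul_map, mul_assoc, map_mul_charIdem, mul_smul_comm]
  rw [← sub_eq_zero, ← sub_smul] at hsmul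
  exact (smul_eq_zero.mp hsmul).resolve_left (sub_ne_zero.mpr (mt Units.ext hx))

variable [IsMulCommutative P] [HasEnoughRootsOfUnity k (Monoid.exponent P)]

open scoped IsMulCommutative

variable (k) in
lemma finite_characters : Finite (P →* kˣ) :=
  .of_equiv P (CommGroup.monoidHom_mulEquiv_of_hasEnoughRootsOfUnity P k).some.symm

variable (k) in
lemma sum_characters_inv_apply [Fintype (P →* kˣ)] [DecidableEq P] (x : P) :
    ∑ a : P →* kˣ, ((a x)⁻¹ : k) = if x = 1 then (Nat.card P : k) else 0 := by
  split_ifs with h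
  · simp [h, ← Nat.card_eq_fintype_card, CommGroup.card_monoidHom_of_hasEnoughRootsOfUnity]
  · obtain ⟨φ, hφ⟩ := CommGroup.exists_apply_ne_one_of_hasEnoughRootsOfUnity P k h
    have := sum_hom_units_eq_zero ((Units.coeHom k).comp (MonoidHom.eval x⁻¹ : (P →* kˣ) →* kˣ))
      (DFunLike.ne_iff.mpr ⟨φ, by simpa using hφ⟩)
    simpa using this

variable [CharZero k]

lemma sum_charIdem [Fintype (P →* kˣ)] : ∑ a : P →* kˣ, charIdem σ a = 1 := by
  classical
  cases nonempty_fintype P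
  simp only [charIdem_eq_sum, Units.smul_def, Units.val_inv_eq_inv_val]
  rw [← Finset.smul_sum, Finset.sum_comm]
  simp only [← Finset.sum_smul, sum_characters_inv_apply k, ite_smul, zero_smul]
  rw [Finset.sum_ite_eq' Finset.univ (1 : P), if_pos (Finset.mem_univ _), map_one,
    inv_smul_smul₀ (Nat.cast_ne_zero.mpr Nat.card_pos.ne')]

lemma eq_of_forall_mul_charIdem_eq {T S : A}
    (h : ∀ a : P →* kˣ, T * charIdem σ a = S * charIdem σ a) : T = S := by
  have := finite_characters k (P := P)
  cases nonempty_fintype (P →* kˣ)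
  rw [← mul_one T, ← mul_one S, ← sum_charIdem (k := k) σ, Finset.mul_sum, Finset.mul_sum]
  exact Finset.sum_congr rfl fun a _ => h a

lemma exists_charIdem_ne_zero [Nontrivial A] : ∃ a : P →* kˣ, charIdem σ a ≠ 0 := by
  by_contra! h
  exact one_ne_zero (eq_of_forall_mul_charIdem_eq (k := k) σ (T := 1) (S := 0)
    fun a => by rw [h a, mul_zero, mul_zero])

end CharIdem

section GroupOrder

variable {k M A : Type*} [Field k] [Monoid M] [Ring A] [Algebra k A]

/-- The `O`-order spanned by the image of a representation: the image of `O[M]` in `A`. -/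
def imageOrder (O : ValuationSubring k) (σ : M →* A) : Subalgebra O A :=
  Algebra.adjoin O (Set.range σ)

variable {O : ValuationSubring k} {σ : M →* A}

lemma map_mem_imageOrder (O : ValuationSubring k) (σ : M →* A) (x : M) : σ x ∈ imageOrder O σ :=
  Algebra.subset_adjoin ⟨x, rfl⟩

lemma isIntegral_of_mem_imageOrder [Finite M] {T : A} (hT : T ∈ imageOrder O σ) :
    IsIntegral O T := by
  refine .of_mem_of_fg _ ?_ T hT
  rw [imageOrder, Algebra.adjoin_eq_span, ← MonoidHom.coe_mrange, Submonoid.closure_eq]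
  exact Submodule.fg_span (Set.finite_range σ)

lemma valuation_le_one_of_isIntegral_of_apply_eq_smul {V : Type*} [AddCommGroup V] [Module k V]
    {T : Module.End k V} (hT : IsIntegral O T) {c : k} {u : V} (hu : u ≠ 0) (h : T u = c • u) :
    O.valuation c ≤ 1 := by
  obtain ⟨q, monic_q, hq⟩ := hT
  have hroot : Polynomial.eval₂ (algebraMap O k) c q • u = 0 := by
    have aeval_eq := Module.End.aeval_apply_of_hasEigenvector (p := q.map (algebraMap O k))
      ⟨Module.End.mem_eigenspace_iff.mpr h, hu⟩
    rw [Polynomial.aeval_map_algebraMap, Polynomial.aeval_def, hq, LinearMap.zero_apply,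
      Polynomial.eval_map] at aeval_eq
    exact aeval_eq.symm
  obtain ⟨r, rfl⟩ := IsIntegrallyClosed.isIntegral_iff.mp
    ⟨q, monic_q, (smul_eq_zero.mp hroot).resolve_right hu⟩
  exact O.valuation_le_one r

end GroupOrder

section RelativeTrace

lemma sum_eq_card_nsmul_sum_orbits {P X M : Type*} [Group P] [MulAction P X] [AddCommMonoid M]
    [Fintype X] [Fintype (MulAction.orbitRel.Quotient P X)]
    (free : ∀ x : X, MulAction.stabilizer P x = ⊥) {f : X → M}
    (hf : ∀ (p : P) x, f (p • x) = f x) :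
    ∑ x, f x = Nat.card P • ∑ ω : MulAction.orbitRel.Quotient P X, f ω.out := by
  rcases isEmpty_or_nonempty X with hX | ⟨⟨x₀⟩⟩
  · have : IsEmpty (MulAction.orbitRel.Quotient P X) := ⟨fun ω => hX.false ω.out⟩
    simp
  have : Finite P := .of_injective (· • x₀) fun (p q : P) h => by
    have : q⁻¹ * p ∈ MulAction.stabilizer P x₀ := by
      rw [MulAction.mem_stabilizer_iff, mul_smul, show p • x₀ = q • x₀ from h, inv_smul_smul]
    rw [free, Subgroup.mem_bot] at this
    exact (inv_mul_eq_one.mp this).symm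
  cases nonempty_fintype P
  have f_out (x : X) : f (Quotient.mk (MulAction.orbitRel P X) x).out = f x := by
    obtain ⟨p, hp⟩ := (MulAction.orbitRel_apply (G := P)).mp (Quotient.mk_out x)
    rw [← hp, hf]
  have sum_equiv := Fintype.sum_equiv (MulAction.selfEquivOrbitsQuotientProd free) f
    (fun y => f y.1.out) fun x => (f_out x).symm
  rw [sum_equiv, Fintype.sum_prod_type, Finset.smul_sum]
  simp

lemma exists_sum_eq_add_card_nsmul_sum {P X M : Type*} [Group P] [MulAction P X] [AddCommMonoid M]
    [Fintype X] {x₀ : X} (fixed : ∀ p : P, p • x₀ = x₀)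
    (free : ∀ x ≠ x₀, ∀ p : P, p • x = x → p = 1) {f : X → M}
    (hf : ∀ (p : P) x, f (p • x) = f x) :
    ∃ s : Finset X, ∑ x, f x = f x₀ + Nat.card P • ∑ x ∈ s, f x := by
  classical
  let Y : SubMulAction P X :=
    ⟨{x | x ≠ x₀}, fun p {x} hx h => hx (by rw [← inv_smul_smul p x, h, fixed])⟩
  have : Fintype (MulAction.orbitRel.Quotient P Y) := Fintype.ofFinite _
  have sum_Y := sum_eq_card_nsmul_sum_orbits (P := P) (X := Y) (f := fun y => f y)
    (fun y => (Subgroup.eq_bot_iff_forall _).mpr fun p hp =>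
      free y y.2 p (congrArg Subtype.val hp)) fun p y => hf p y
  refine ⟨Finset.univ.map ⟨fun ω : MulAction.orbitRel.Quotient P Y => (ω.out : X),
    Subtype.val_injective.comp Quotient.out_injective⟩, ?_⟩
  rw [Finset.sum_map, Function.Embedding.coeFn_mk, ← sum_Y, Fintype.sum_eq_add_sum_compl x₀,
    ← Finset.sum_subtype {x₀}ᶜ (fun x => by rw [Finset.mem_compl, Finset.mem_singleton]; rfl) f]

variable {k G A : Type*} [Field k] [Group G] [Ring A] [Algebra k A]

/-- The `c`-conjugate of `w`; independent of the representative of the coset `c` once `w` commutes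
with the image of `N`. -/
noncomputable def cosetConj (σ : G →* A) (N : Subgroup G) (w : A) (c : G ⧸ N) : A :=
  σ c.out * w * σ c.out⁻¹

/-- The relative trace `∑_{c ∈ G/N} c w c⁻¹` of an element `w` commuting with the image of `N`. -/
noncomputable def relTrace (σ : G →* A) (N : Subgroup G) (w : A) : A :=
  ∑ᶠ c : G ⧸ N, cosetConj σ N w c

variable {N P : Subgroup G} {σ : G →* A} {w : A}

lemma cosetConj_mk (hw : ∀ g ∈ N, Commute (σ g) w) (g : G) :
    cosetConj σ N w g = σ g * w * σ g⁻¹ := by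
  obtain ⟨n, hn⟩ := QuotientGroup.mk_out_eq_mul N g
  have cancel : σ (n : G) * σ (n : G)⁻¹ = 1 := by rw [← map_mul, mul_inv_cancel, map_one]
  rw [cosetConj, hn, _root_.mul_inv_rev, map_mul, map_mul, mul_assoc (σ g), (hw n n.2).eq,
    ← mul_assoc, ← mul_assoc, mul_assoc _ (σ (n : G)), cancel, mul_one]

lemma cosetConj_smul (hw : ∀ g ∈ N, Commute (σ g) w) (g : G) (c : G ⧸ N) :
    cosetConj σ N w (g • c) = σ g * cosetConj σ N w c * σ g⁻¹ := by
  induction c using QuotientGroup.induction_on with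
  | H h =>
    rw [MulAction.Quotient.smul_coe, smul_eq_mul, cosetConj_mk hw, cosetConj_mk hw]
    simp only [_root_.mul_inv_rev, map_mul, mul_assoc]

lemma commute_relTrace [Finite (G ⧸ N)] (hw : ∀ g ∈ N, Commute (σ g) w) (g : G) :
    Commute (σ g) (relTrace σ N w) := by
  cases nonempty_fintype (G ⧸ N)
  have cancel : σ g⁻¹ * σ g = 1 := by rw [← map_mul, inv_mul_cancel, map_one]
  rw [relTrace, finsum_eq_sum_of_fintype, commute_iff_eq, Finset.mul_sum, Finset.sum_mul]
  refine Fintype.sum_equiv (MulAction.toPerm g) _ _ fun c => ?_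
  rw [MulAction.toPerm_apply, cosetConj_smul hw, mul_assoc, cancel, mul_one]

/-- `P` has trivial intersection with the conjugates of `N` by elements outside `N`. Equivalently,
`P` acts freely on the nontrivial cosets of `N`. -/
def IsTrivialIntersection (P N : Subgroup G) : Prop :=
  ∀ g ∉ N, ∀ x ∈ P, g⁻¹ * x * g ∈ N → x = 1

lemma IsTrivialIntersection.eq_one_of_smul_eq (h : IsTrivialIntersection P N) {c : G ⧸ N}
    (hc : c ≠ (1 : G)) {x : P} (hx : x • c = c) : x = 1 := by
  induction c using QuotientGroup.induction_on with
  | H g =>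
    refine Subtype.ext (h g (fun hg => hc ?_) x x.2 ?_)
    · rw [QuotientGroup.eq]
      simpa using hg
    · have hx' : ((x * g : G) : G ⧸ N) = g := hx
      rw [eq_comm, QuotientGroup.eq] at hx'
      simpa [mul_assoc] using hx'

variable [Finite P]

/-- The character idempotents of the restriction of `σ` to a subgroup. -/
noncomputable abbrev subgroupIdem (σ : G →* A) (P : Subgroup G)
    (a : P →* kˣ) : A :=
  charIdem (σ.comp P.subtype) a

lemma charIdem_mul_conj_mul_charIdem (a : P →* kˣ) (x : P) (T : A) :
    subgroupIdem σ P a * (σ x * T * σ (x : G)⁻¹) * subgroupIdem σ P a =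
      subgroupIdem σ P a * T * subgroupIdem σ P a := by
  have left : subgroupIdem σ P a * σ x = (a x : k) • subgroupIdem σ P a :=
    charIdem_mul_map (σ.comp P.subtype) a x
  have right : σ (x : G)⁻¹ * subgroupIdem σ P a = (a x⁻¹ : k) • subgroupIdem σ P a :=
    map_mul_charIdem (σ.comp P.subtype) a x⁻¹
  calc subgroupIdem σ P a * (σ x * T * σ (x : G)⁻¹) * subgroupIdem σ P a
      = (subgroupIdem σ P a * σ x) * T * (σ (x : G)⁻¹ * subgroupIdem σ P a) := by
        simp only [mul_assoc]
    _ = _ := by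
        rw [left, right, smul_mul_assoc, smul_mul_assoc, mul_smul_comm, smul_smul, ← Units.val_mul,
          ← map_mul, mul_inv_cancel, map_one, Units.val_one, one_smul]

variable [CharZero k] [Finite (G ⧸ N)]

lemma exists_charIdem_mul_relTrace_mul_charIdem (hPN : P ≤ N) (hTI : IsTrivialIntersection P N)
    (hw : ∀ g ∈ N, Commute (σ g) w) {a : P →* kˣ} {c : k}
    (hwa : w * subgroupIdem σ P a = c • subgroupIdem σ P a) :
    ∃ s : Finset (G ⧸ N), subgroupIdem σ P a * relTrace σ N w * subgroupIdem σ P a =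
      c • subgroupIdem σ P a + (Nat.card P : k) •
        ((subgroupIdem σ P a * ∑ d ∈ s, cosetConj σ N w d) * subgroupIdem σ P a) := by
  cases nonempty_fintype (G ⧸ N)
  set e := subgroupIdem σ P a
  have e_mul_e : e * e = e := isIdempotentElem_charIdem (σ.comp P.subtype) a
  have fixed (x : P) : x • ((1 : G) : G ⧸ N) = (1 : G) := by
    change ((x * 1 : G) : G ⧸ N) = (1 : G)
    rw [QuotientGroup.eq]
    simpa using hPN x.2
  obtain ⟨s, hs⟩ := exists_sum_eq_add_card_nsmul_sum fixed
    (fun d hd x => hTI.eq_one_of_smul_eq hd) (f := fun d => e * cosetConj σ N w d * e)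
    fun x d => by
      change e * cosetConj σ N w ((x : G) • d) * e = _
      rw [cosetConj_smul hw, charIdem_mul_conj_mul_charIdem]
  refine ⟨s, ?_⟩
  have base : e * cosetConj σ N w (1 : G) * e = c • e := by
    rw [cosetConj_mk hw, inv_one, map_one, one_mul, mul_one, mul_assoc, hwa, mul_smul_comm, e_mul_e]
  rw [relTrace, finsum_eq_sum_of_fintype, Finset.mul_sum, Finset.sum_mul, hs, base,
    Finset.mul_sum, Finset.sum_mul, Nat.cast_smul_eq_nsmul]

end RelativeTrace

section Separation

open Module.End in
lemma exists_aeval_eq_zero_of_disjoint_eigenvalues {k V : Type*} [Field k] [IsAlgClosed k]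
    [AddCommGroup V] [Module k V] [FiniteDimensional k V] {T : Module.End k V}
    {W W' : Submodule k V} (hW : W ∈ invtSubmodule T) (hW' : W' ∈ invtSubmodule T)
    (disj : ∀ c : k, ∀ u ∈ W, ∀ v ∈ W', T u = c • u → T v = c • v → u = 0 ∨ v = 0) :
    ∃ q : Polynomial k, (∀ u ∈ W, Polynomial.aeval T q u = 0) ∧
      ∀ v ∈ W', Polynomial.aeval T q v = 0 → v = 0 := by
  have aeval_restrict {S : Submodule k V} (hS : S ∈ invtSubmodule T) (q : Polynomial k) (u : S) :
      (Polynomial.aeval (T.restrict hS) q u : V) = Polynomial.aeval T q u := by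
    induction q using Polynomial.induction_on generalizing u with
    | C c => simp
    | add p q hp hq => simp [hp, hq]
    | monomial n c ih =>
      simp only [Polynomial.aeval_mul, Polynomial.aeval_C, map_pow, Polynomial.aeval_X] at ih ⊢
      simpa [pow_succ, LinearMap.coe_restrict_apply hS u] using ih (T.restrict hS u)
  refine ⟨minpoly k (T.restrict hW), fun u hu => ?_, fun v hv hqv => ?_⟩
  · rw [← aeval_restrict hW _ ⟨u, hu⟩, minpoly.aeval, LinearMap.zero_apply, Submodule.coe_zero]
  by_contra hv0
  have : Nontrivial W' := ⟨⟨v, hv⟩, 0, fun h => hv0 (congrArg Subtype.val h)⟩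
  have has_eigenvalue_zero :
      HasEigenvalue (Polynomial.aeval (T.restrict hW') (minpoly k (T.restrict hW))) 0 :=
    hasEigenvalue_of_hasEigenvector (x := ⟨v, hv⟩) ⟨by
      rw [mem_eigenspace_iff, zero_smul]
      exact Subtype.ext ((aeval_restrict hW' _ _).trans hqv), fun h => hv0 (congrArg Subtype.val h)⟩
  rw [hasEigenvalue_iff_mem_spectrum, spectrum.map_polynomial_aeval_of_nonempty _ _
    (spectrum.nonempty_of_isAlgClosed_of_finiteDimensional k _)] at has_eigenvalue_zero
  obtain ⟨c, hc, hroot⟩ := has_eigenvalue_zero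
  obtain ⟨y, hy⟩ := (hasEigenvalue_iff_mem_spectrum.mpr hc).exists_hasEigenvector
  obtain ⟨x, hx⟩ := (hasEigenvalue_of_isRoot hroot).exists_hasEigenvector
  rcases disj c x x.2 y y.2 (congrArg Subtype.val hx.apply_eq_smul)
    (congrArg Subtype.val hy.apply_eq_smul) with h | h
  exacts [hx.2 (Subtype.ext h), hy.2 (Subtype.ext h)]

variable {k G U : Type*} [Field k] [CharZero k] {O : ValuationSubring k} [Group G] [AddCommGroup U]
  [Module k U] {σ : G →* Module.End k U} {P N : Subgroup G} [Finite P] {w : Module.End k U}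
  {R : Subalgebra O (Module.End k U)} {D : k}

lemma valuation_mul_sub_le_of_relTrace_apply_eq_smul [Finite (G ⧸ N)] (hPN : P ≤ N)
    (hTI : IsTrivialIntersection P N) (hw : ∀ g ∈ N, Commute (σ g) w) (hσR : ∀ g, σ g ∈ R)
    (hR : ∀ T ∈ R, IsIntegral O T) (hwR : w ∈ R) {a : P →* kˣ} {c : k}
    (hwa : w * subgroupIdem σ P a = c • subgroupIdem σ P a) (hDa : D • subgroupIdem σ P a ∈ R)
    {u : U} (hu : u ≠ 0) (hau : subgroupIdem σ P a u = u) {r : k}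
    (hr : relTrace σ N w u = r • u) :
    O.valuation (D * (r - c)) ≤ O.valuation (Nat.card P : k) := by
  obtain ⟨s, hs⟩ := exists_charIdem_mul_relTrace_mul_charIdem hPN hTI hw hwa
  set e := subgroupIdem σ P a
  have card_ne_zero : (Nat.card P : k) ≠ 0 := Nat.cast_ne_zero.mpr Nat.card_pos.ne'
  have mem_R : (D • e) * ∑ d ∈ s, cosetConj σ N w d ∈ R :=
    R.mul_mem hDa (sum_mem fun d _ => R.mul_mem (R.mul_mem (hσR _) hwR) (hσR _))
  have apply_u : (e * ∑ d ∈ s, cosetConj σ N w d) u = ((r - c) / Nat.card P) • u := by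
    have := congrArg (· u) hs
    simp only [Module.End.mul_apply, LinearMap.add_apply, LinearMap.smul_apply, hau, hr,
      map_smul] at this
    rw [div_eq_inv_mul, mul_smul, sub_smul, this, add_sub_cancel_left, inv_smul_smul₀ card_ne_zero,
      Module.End.mul_apply]
  have val_le := valuation_le_one_of_isIntegral_of_apply_eq_smul (hR _ mem_R) hu
    (c := D * ((r - c) / Nat.card P)) (by
      rw [smul_mul_assoc, LinearMap.smul_apply, apply_u, smul_smul])
  rw [← mul_div_assoc, map_div₀] at val_le
  exact (div_le_one₀ (zero_lt_iff.mpr ((Valuation.ne_zero_iff _).mpr card_ne_zero))).mp val_le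

/-- The `a`-part and the `b`-part of a representation, with respect to characters `a` and `b` of a
subgroup `P`, are separated if some endomorphism of the representation kills the former and is
injective on the latter. -/
def AreSeparated (σ : Representation k G U) (P : Subgroup G) (a b : P →* kˣ) : Prop :=
  ∃ T : Module.End k U, (∀ g, Commute (σ g) T) ∧ T * subgroupIdem σ P a = 0 ∧
    ∀ u, T u = 0 → subgroupIdem σ P b u = 0

variable [IsAlgClosed k] [FiniteDimensional k U]

/- The relative trace of `w` acts on the `a`- and `b`-parts with eigenvalues congruent modulo
`|P| / D` to those of `w` itself, so a gap between the latter keeps the two spectra disjoint. -/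
theorem areSeparated_of_valuation_lt [Finite (G ⧸ N)] (hPN : P ≤ N)
    (hTI : IsTrivialIntersection P N)
    (hw : ∀ g ∈ N, Commute (σ g) w) (hσR : ∀ g, σ g ∈ R) (hR : ∀ T ∈ R, IsIntegral O T)
    (hwR : w ∈ R) {a b : P →* kˣ} {c d : k}
    (hwa : w * subgroupIdem σ P a = c • subgroupIdem σ P a)
    (hwb : w * subgroupIdem σ P b = d • subgroupIdem σ P b)
    (hDa : D • subgroupIdem σ P a ∈ R) (hDb : D • subgroupIdem σ P b ∈ R)
    (gap : O.valuation (Nat.card P : k) < O.valuation (D * (c - d))) :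
    AreSeparated σ P a b := by
  have idem_apply (x : P →* kˣ) (u : U) :
      subgroupIdem σ P x (subgroupIdem σ P x u) = subgroupIdem σ P x u := by
    rw [← Module.End.mul_apply, isIdempotentElem_charIdem]
  have comm (q : Polynomial k) (g : G) : Commute (σ g) (Polynomial.aeval (relTrace σ N w) q) :=
    Algebra.commute_of_mem_adjoin_singleton_of_commute (Polynomial.aeval_mem_adjoin_singleton k _)
      (commute_relTrace hw g)
  have comm_idem (x : P →* kˣ) (q : Polynomial k) :
      Commute (Polynomial.aeval (relTrace σ N w) q) (subgroupIdem σ P x) :=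
    commute_charIdem x fun y => (comm q y).symm
  have range_invariant (x : P →* kˣ) :
      LinearMap.range (subgroupIdem σ P x) ∈ Module.End.invtSubmodule (relTrace σ N w) := by
    rintro _ ⟨u, rfl⟩
    refine ⟨relTrace σ N w u, ?_⟩
    have := comm_idem x Polynomial.X
    rw [Polynomial.aeval_X] at this
    exact LinearMap.congr_fun this.eq.symm u
  obtain ⟨q, hqa, hqb⟩ := exists_aeval_eq_zero_of_disjoint_eigenvalues (range_invariant a)
    (range_invariant b) fun r u hu v hv hru hrv => by
      obtain ⟨u, rfl⟩ := hu
      obtain ⟨v, rfl⟩ := hv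
      by_contra! hne
      have gap_a := valuation_mul_sub_le_of_relTrace_apply_eq_smul hPN hTI hw hσR hR hwR hwa hDa
        hne.1 (idem_apply a u) hru
      have gap_b := valuation_mul_sub_le_of_relTrace_apply_eq_smul hPN hTI hw hσR hR hwR hwb hDb
        hne.2 (idem_apply b v) hrv
      rw [show D * (c - d) = D * (r - d) - D * (r - c) by ring] at gap
      exact gap.not_ge (Valuation.map_sub_le _ gap_b gap_a)
  refine ⟨Polynomial.aeval (relTrace σ N w) q, comm q, LinearMap.ext fun u => hqa _ ⟨u, rfl⟩,
    fun u hu => hqb _ ⟨u, rfl⟩ ?_⟩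
  rw [← Module.End.mul_apply, (comm_idem b q).eq, Module.End.mul_apply, hu, map_zero]

end Separation

section Denominators

lemma exists_isPrimitiveRoot_apply {k P : Type*} [Field k] [Group P] {p : ℕ} [Fact p.Prime]
    (hP : IsPGroup p P) {c : P →* kˣ} (hc : c ≠ 1) : ∃ y, IsPrimitiveRoot (c y : k) p := by
  obtain ⟨x, hx⟩ := DFunLike.ne_iff.mp hc
  obtain ⟨n, hn⟩ := hP x
  have hn' : c x ^ p ^ n = 1 := by rw [← map_pow, hn, map_one]
  obtain ⟨j, -, hj⟩ := (Nat.dvd_prime_pow Fact.out).mp (orderOf_dvd_of_pow_eq_one hn')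
  obtain ⟨i, rfl⟩ := Nat.exists_eq_succ_of_ne_zero (n := j) fun hj0 =>
    hx (orderOf_eq_one_iff.mp (by rw [hj, hj0, pow_zero]))
  refine ⟨x ^ p ^ i, IsPrimitiveRoot.coe_units_iff.mpr ?_⟩
  rw [map_pow]
  have := IsPrimitiveRoot.orderOf (c x)
  rw [hj] at this
  exact this.pow (pow_ne_zero _ (Fact.out : p.Prime).ne_zero).bot_lt (pow_succ p i)

variable {k P A : Type*} [Field k] (O : ValuationSubring k) [Group P] [Finite P] {p : ℕ}
  [Fact p.Prime] (hP : IsPGroup p P) {ζ : k} (hζ : IsPrimitiveRoot ζ p)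

omit [Fact p.Prime] in
lemma valuation_character_eq_one (a : P →* kˣ) (x : P) : O.valuation (a x : k) = 1 :=
  valuation_eq_one_of_pow_eq_one O Nat.card_pos.ne' (by
    rw [← Units.val_pow_eq_pow_val, ← map_pow, pow_card_eq_one', map_one, Units.val_one])

include hP hζ

lemma exists_valuation_sub_eq {a b : P →* kˣ} (hab : a ≠ b) :
    ∃ y, O.valuation ((a y : k) - b y) = O.valuation (1 - ζ) := by
  obtain ⟨y, hy⟩ := exists_isPrimitiveRoot_apply hP (c := a / b) (div_ne_one.mpr hab)
  have factor : (a y : k) - b y = -(b y * (1 - ((a / b) y : kˣ))) := by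
    rw [MonoidHom.div_apply, Units.val_div_eq_div_val, mul_sub, mul_one,
      mul_div_cancel₀ _ (b y).ne_zero, neg_sub]
  refine ⟨y, ?_⟩
  rw [factor, Valuation.map_neg, map_mul, valuation_character_eq_one, one_mul,
    valuation_one_sub_eq O hζ hy]

variable [Ring A] [Algebra k A] {σ : P →* A} {R : Subalgebra O A} (hσ : ∀ x, σ x ∈ R)

include hσ

lemma exists_mul_charIdem_eq_smul {a b : P →* kˣ} (hab : a ≠ b) :
    ∃ T ∈ R, ∃ t : (P →* kˣ) → k, (∀ c, T * charIdem σ c = t c • charIdem σ c) ∧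
      t a = 1 - ζ ∧ t b = 0 := by
  obtain ⟨y, hy⟩ := exists_valuation_sub_eq O hP hζ hab
  have val_one_sub_ne_zero : O.valuation (1 - ζ) ≠ 0 := O.valuation.ne_zero_iff.mpr
    (sub_ne_zero.mpr (hζ.ne_one (Fact.out : p.Prime).one_lt).symm)
  have sub_ne_zero : (a y : k) - b y ≠ 0 := by
    rwa [← O.valuation.ne_zero_iff, hy]
  let u : O := ⟨(1 - ζ) / ((a y : k) - b y), (O.valuation_le_one_iff _).mp (by
    rw [map_div₀, hy, div_self val_one_sub_ne_zero])⟩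
  let β : O := ⟨b y, (O.valuation_le_one_iff _).mp (valuation_character_eq_one O b y).le⟩
  refine ⟨u • (σ y - algebraMap k A (b y)),
    R.smul_mem (R.sub_mem (hσ y) (R.algebraMap_mem β)) u,
    fun c => (1 - ζ) / ((a y : k) - b y) * ((c y : k) - b y), fun c => ?_,
    div_mul_cancel₀ _ sub_ne_zero, mul_eq_zero_of_right _ (sub_self _)⟩
  rw [smul_mul_assoc, sub_mul, map_mul_charIdem, ← Algebra.smul_def, ← sub_smul, mul_smul]
  rfl

lemma exists_mul_charIdem_eq_pow_smul {a : P →* kˣ} (S : Finset (P →* kˣ)) (haS : a ∉ S) :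
    ∃ T ∈ R, T * charIdem σ a = (1 - ζ) ^ S.card • charIdem σ a ∧
      ∀ b ∈ S, T * charIdem σ b = 0 := by
  classical
  induction S using Finset.induction_on with
  | empty => exact ⟨1, R.one_mem, by simp, by simp⟩
  | insert b S hb ih =>
    rw [Finset.mem_insert, not_or] at haS
    obtain ⟨T, hT, hTa, hTS⟩ := ih haS.2
    obtain ⟨U, hU, t, ht, hta, htb⟩ := exists_mul_charIdem_eq_smul O hP hζ hσ haS.1
    refine ⟨T * U, R.mul_mem hT hU, ?_, fun c hc => ?_⟩
    · rw [mul_assoc, ht, hta, mul_smul_comm, hTa, smul_smul, Finset.card_insert_of_notMem hb,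
        pow_succ']
    · rw [mul_assoc, ht, mul_smul_comm]
      rcases Finset.mem_insert.mp hc with rfl | h
      · rw [htb, zero_smul]
      · rw [hTS c h, smul_zero]

omit hP hζ hσ

/-- The characters of `P` occurring in the left multiplication action of `P` on `A`. -/
def occurringChars (k : Type*) [Field k] [Algebra k A] (σ : P →* A) : Set (P →* kˣ) :=
  {a | charIdem σ a ≠ 0}

variable [CharZero k] [IsMulCommutative P] [HasEnoughRootsOfUnity k (Monoid.exponent P)]

include hP hζ hσ in
lemma pow_smul_charIdem_mem (a : P →* kˣ) :
    (1 - ζ) ^ ((occurringChars k σ).ncard - 1) • charIdem σ a ∈ R := by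
  classical
  have := finite_characters k (P := P)
  by_cases ha : charIdem σ a = 0
  · rw [ha, smul_zero]
    exact R.zero_mem
  obtain ⟨T, hT, hTa, hTS⟩ := exists_mul_charIdem_eq_pow_smul O hP hζ hσ (a := a)
    ((occurringChars k σ) \ {a}).toFinite.toFinset (by simp)
  rw [← Set.ncard_eq_toFinset_card, Set.ncard_sdiff_singleton_of_mem ha] at hTa
  convert hT using 1
  refine eq_of_forall_mul_charIdem_eq (k := k) σ fun b => ?_
  by_cases hab : b = a
  · rw [hab, smul_mul_assoc, isIdempotentElem_charIdem, hTa]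
  rw [smul_mul_assoc, charIdem_mul_charIdem_of_ne σ (Ne.symm hab), smul_zero]
  by_cases hb : charIdem σ b = 0
  · rw [hb, mul_zero]
  · exact (hTS b (by simp [occurringChars, hb, hab])).symm

lemma ncard_occurringChars_le_finrank {V : Type*} [AddCommGroup V] [Module k V]
    [FiniteDimensional k V] (σ : P →* Module.End k V) :
    (occurringChars k σ).ncard ≤ Module.finrank k V := by
  have := finite_characters k (P := P)
  cases nonempty_fintype (occurringChars k σ)
  have exists_apply_ne (a : occurringChars k σ) : ∃ u, charIdem σ (a : P →* kˣ) u ≠ 0 := by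
    by_contra! h
    exact a.2 (LinearMap.ext h)
  choose u hu using exists_apply_ne
  have indep : LinearIndependent k fun a : occurringChars k σ =>
      (charIdem σ (a : P →* kˣ) : Module.End k V) (u a) := by
    rw [Fintype.linearIndependent_iff]
    intro c hc a
    have := congrArg (charIdem σ (a : P →* kˣ) : Module.End k V) hc
    rw [map_sum, map_zero, Finset.sum_eq_single a, map_smul, ← Module.End.mul_apply,
      isIdempotentElem_charIdem] at this
    · exact (smul_eq_zero.mp this).resolve_right (hu a)
    · intro b _ hb
      rw [map_smul, ← Module.End.mul_apply, charIdem_mul_charIdem_of_ne, LinearMap.zero_apply,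
        smul_zero]
      exact fun h => hb (Subtype.ext h.symm)
    · simp
  rw [← Nat.card_coe_set_eq, Nat.card_eq_fintype_card]
  exact indep.fintype_card_le_finrank

end Denominators

section LinHom

variable {k G V : Type*} [Field k] {O : ValuationSubring k} [Group G] [AddCommGroup V] [Module k V]
  (ρ : Representation k G V)

/-- The action `φ ↦ ρ(g) φ ρ(h)⁻¹` of `G × G` on `End V`. -/
noncomputable abbrev twoSidedHom : Representation k (G × G) (Module.End k V) :=
  Representation.linHom (ρ.comp (MonoidHom.snd G G)) (ρ.comp (MonoidHom.fst G G))

lemma mulLeft_mem_imageOrder {T : Module.End k V} (hT : T ∈ imageOrder O ρ) :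
    LinearMap.mulLeft k T ∈ imageOrder O (twoSidedHom ρ) := by
  induction hT using Algebra.adjoin_induction with
  | mem _ h =>
    obtain ⟨g, rfl⟩ := h
    convert map_mem_imageOrder O (twoSidedHom ρ) (g, 1)
    ext φ v; simp
  | algebraMap c =>
    convert Subalgebra.algebraMap_mem (imageOrder O (twoSidedHom ρ)) c
    ext φ v; rfl
  | add T S _ _ hT hS =>
    convert add_mem hT hS
    ext φ v; simp
  | mul T S _ _ hT hS => rw [LinearMap.mulLeft_mul]; exact mul_mem hT hS

lemma mulRight_mem_imageOrder {T : Module.End k V} (hT : T ∈ imageOrder O ρ) :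
    LinearMap.mulRight k T ∈ imageOrder O (twoSidedHom ρ) := by
  induction hT using Algebra.adjoin_induction with
  | mem _ h =>
    obtain ⟨g, rfl⟩ := h
    convert map_mem_imageOrder O (twoSidedHom ρ) (1, g⁻¹)
    ext φ v; simp
  | algebraMap c =>
    convert Subalgebra.algebraMap_mem (imageOrder O (twoSidedHom ρ)) c
    ext φ v
    exact map_smul φ (c : k) v
  | add T S _ _ hT hS =>
    convert add_mem hT hS
    ext φ v; simp
  | mul T S _ _ hT hS => rw [LinearMap.mulRight_mul]; exact mul_mem hS hT

variable {P : Subgroup G} [Finite P]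

lemma charIdem_linHom_apply_mul (l b : P →* kˣ) (φ : Module.End k V) :
    subgroupIdem (ρ.linHom ρ) P l φ * subgroupIdem ρ P b =
      subgroupIdem ρ P (l * b) * φ * subgroupIdem ρ P b := by
  cases nonempty_fintype P
  have term (x : P) : (ρ x * φ * ρ (x : G)⁻¹) * subgroupIdem ρ P b =
      ((b x)⁻¹ : kˣ) • (ρ x * φ * subgroupIdem ρ P b) := by
    have inv_mul : ρ (x : G)⁻¹ * subgroupIdem ρ P b = (b x⁻¹ : k) • subgroupIdem ρ P b :=
      map_mul_charIdem (ρ.comp P.subtype) b x⁻¹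
    rw [mul_assoc, inv_mul, mul_smul_comm, map_inv, Units.smul_def]
  rw [subgroupIdem, charIdem_eq_sum ((ρ.linHom ρ).comp P.subtype) l, subgroupIdem,
    subgroupIdem, charIdem_eq_sum (ρ.comp P.subtype) (l * b), LinearMap.smul_apply,
    LinearMap.sum_apply, smul_mul_assoc, smul_mul_assoc, smul_mul_assoc, Finset.sum_mul,
    Finset.sum_mul, Finset.sum_mul]
  congr 1
  refine Finset.sum_congr rfl fun x _ => ?_
  calc ((l x)⁻¹ : kˣ) • ((ρ x * φ * ρ (x : G)⁻¹) * subgroupIdem ρ P b)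
      = ((l x)⁻¹ : kˣ) • ((b x)⁻¹ : kˣ) • (ρ x * φ * subgroupIdem ρ P b) := by rw [term]
    _ = (((l * b) x)⁻¹ : kˣ) • ρ x * φ * subgroupIdem ρ P b := by
        rw [smul_smul, ← _root_.mul_inv, MonoidHom.mul_apply, smul_mul_assoc, smul_mul_assoc]

variable [CharZero k] [IsMulCommutative P] [HasEnoughRootsOfUnity k (Monoid.exponent P)]

lemma charIdem_linHom_eq_sum [Fintype (P →* kˣ)] (l : P →* kˣ) :
    subgroupIdem (ρ.linHom ρ) P l = ∑ b, LinearMap.mulLeft k (subgroupIdem ρ P (l * b)) *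
      LinearMap.mulRight k (subgroupIdem ρ P b) := by
  ext φ : 1
  rw [LinearMap.sum_apply, ← mul_one (subgroupIdem (ρ.linHom ρ) P l φ),
    ← sum_charIdem (k := k) (ρ.comp P.subtype), Finset.mul_sum]
  refine Finset.sum_congr rfl fun b _ => ?_
  rw [charIdem_linHom_apply_mul]
  simp [mul_assoc]

lemma sq_smul_charIdem_linHom_mem {D : k}
    (hD : ∀ a : P →* kˣ, D • subgroupIdem ρ P a ∈ imageOrder O ρ) (l : P →* kˣ) :
    D ^ 2 • subgroupIdem (ρ.linHom ρ) P l ∈ imageOrder O (twoSidedHom ρ) := by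
  have := finite_characters k (P := P)
  cases nonempty_fintype (P →* kˣ)
  rw [charIdem_linHom_eq_sum, Finset.smul_sum]
  refine sum_mem fun b _ => ?_
  convert mul_mem (mulLeft_mem_imageOrder ρ (hD (l * b))) (mulRight_mem_imageOrder ρ (hD b)) using 1
  ext φ v; simp [smul_smul, sq]

end LinHom

section Automizer

variable {G : Type*} [Group G]

/-- The group of automorphisms of a subgroup induced by conjugation in its normalizer. -/
abbrev automizer (P : Subgroup G) : Subgroup (MulAut P) :=
  P.normalizerMonoidHom.range

variable {k A : Type*} [Field k] [Ring A] [Algebra k A] (σ : G →* A) {P : Subgroup G}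

lemma map_mul_map_eq_of_mem_normalizer (g : Subgroup.normalizer (P : Set G)) (x : P) :
    σ g * σ x = σ (P.normalizerMonoidHom g x) * σ g := by
  have conj : (P.normalizerMonoidHom g x : G) = g * x * (g : G)⁻¹ := rfl
  rw [← map_mul, ← map_mul, conj, inv_mul_cancel_right]

variable [Finite P]

lemma map_mul_subgroupIdem_comp (g : Subgroup.normalizer (P : Set G)) (a : P →* kˣ) :
    σ g * subgroupIdem σ P (a.comp (P.normalizerMonoidHom g)) = subgroupIdem σ P a * σ g :=
  charIdem_comp_mul _ _ _ a (map_mul_map_eq_of_mem_normalizer σ g)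

lemma comp_mem_occurringChars {τ : MulAut P} (hτ : τ ∈ automizer P) {a : P →* kˣ}
    (ha : a ∈ occurringChars k (σ.comp P.subtype)) :
    a.comp (τ : P →* P) ∈ occurringChars k (σ.comp P.subtype) := by
  obtain ⟨g, rfl⟩ := hτ
  intro h
  have cancel : σ (g : G) * σ (g : G)⁻¹ = 1 := by rw [← map_mul, mul_inv_cancel, map_one]
  have conj := map_mul_subgroupIdem_comp σ g a
  refine ha ?_
  calc subgroupIdem σ P a = subgroupIdem σ P a * σ g * σ (g : G)⁻¹ := by
        rw [mul_assoc, cancel, mul_one]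
    _ = 0 := by
        rw [← conj]
        exact (congrArg (σ g * · * σ (g : G)⁻¹) h).trans (by simp only [mul_zero, zero_mul])

lemma commute_sum_charIdem {S : Finset (P →* kˣ)}
    (hS : ∀ τ ∈ automizer P, ∀ c ∈ S, c.comp (τ : P →* P) ∈ S)
    (g : Subgroup.normalizer (P : Set G)) : Commute (σ g) (∑ c ∈ S, subgroupIdem σ P c) := by
  have mem : P.normalizerMonoidHom g ∈ automizer P := ⟨g, rfl⟩
  rw [commute_iff_eq, Finset.mul_sum, Finset.sum_mul]
  symm
  refine Finset.sum_nbij' (·.comp (P.normalizerMonoidHom g : P →* P))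
    (·.comp ((P.normalizerMonoidHom g)⁻¹ : MulAut P)) (hS _ mem) (hS _ (inv_mem mem)) ?_ ?_
    fun c _ => (map_mul_subgroupIdem_comp σ g c).symm
  all_goals
    intro c _
    ext x
    simp

end Automizer

section TrivialIntersection

variable {k G : Type*} [Field k] {O : ValuationSubring k} {p : ℕ} [Fact p.Prime] {ζ : k}

lemma valuation_natCast_pow_lt_pow (hO : O.valuation (p : k) < 1) (hζ : IsPrimitiveRoot ζ p)
    {f m : ℕ} (hm : m < (p - 1) * f) :
    O.valuation ((p ^ f : ℕ) : k) < O.valuation (1 - ζ) ^ m := by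
  have pow_pred := valuation_one_sub_pow_pred O hζ
  have pos : 0 < O.valuation (1 - ζ) := zero_lt_iff.mpr (O.valuation.ne_zero_iff.mpr
    (sub_ne_zero.mpr (hζ.ne_one (Fact.out : p.Prime).one_lt).symm))
  have lt_one : O.valuation (1 - ζ) < 1 := by
    by_contra! h
    exact (one_le_pow_of_one_le' h (p - 1)).not_gt (pow_pred ▸ hO)
  rw [Nat.cast_pow, map_pow, ← pow_pred, ← pow_mul]
  exact pow_lt_pow_right_of_lt_one₀ pos lt_one hm

lemma injective_of_prime_card {P M : Type*} [Group P] [Group M] (hP : Nat.card P = p) {l : P →* M}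
    (hl : l ≠ 1) : Function.Injective l := by
  have : Fact (Nat.card P).Prime := hP ▸ inferInstance
  rw [← MonoidHom.ker_eq_bot_iff]
  exact l.ker.eq_bot_or_eq_top_of_prime_card.resolve_right fun h =>
    hl (MonoidHom.ker_eq_top_iff.mp h)

lemma isPrimitiveRoot_apply_of_prime_card {P : Type*} [Group P] (hP : Nat.card P = p)
    {l : P →* kˣ} (hl : l ≠ 1) {y : P} (hy : y ≠ 1) : IsPrimitiveRoot (l y : k) p := by
  have orderOf_eq : orderOf (l y) = p := by
    refine orderOf_eq_prime ?_ (((injective_of_prime_card hP hl).ne_iff' (map_one l)).mpr hy)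
    rw [← map_pow, ← hP, pow_card_eq_one', map_one]
  rw [IsPrimitiveRoot.coe_units_iff, ← orderOf_eq]
  exact IsPrimitiveRoot.orderOf _

lemma aeval_mul_of_mul_eq_smul {R A : Type*} [CommSemiring R] [Semiring A] [Algebra R k]
    [Algebra k A] [Algebra R A] [IsScalarTower R k A] {T e : A} {c : k} (h : T * e = c • e)
    (q : Polynomial R) : Polynomial.aeval T q * e = Polynomial.aeval c q • e := by
  have pow (i : ℕ) : T ^ i * e = c ^ i • e := by
    induction i with
    | zero => simp
    | succ i ih => rw [pow_succ, mul_assoc, h, mul_smul_comm, ih, smul_smul, pow_succ']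
  simp only [Polynomial.aeval_eq_sum_range, Finset.sum_mul, Finset.sum_smul, smul_mul_assoc, pow,
    smul_assoc]

lemma semiconjBy_aeval {R A : Type*} [CommSemiring R] [Semiring A] [Algebra R A] {a x y : A}
    (h : SemiconjBy a x y) (q : Polynomial R) :
    SemiconjBy a (Polynomial.aeval x q) (Polynomial.aeval y q) := by
  simp only [SemiconjBy, Polynomial.aeval_eq_sum_range, Finset.mul_sum, Finset.sum_mul,
    mul_smul_comm, smul_mul_assoc, (h.pow_right _).eq]

lemma commute_sum_aeval {R A : Type*} [CommSemiring R] [Ring A] [Algebra R A] [Group G]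
    (σ : G →* A) {P : Subgroup G} [Fintype (automizer P)] (q : Polynomial R) (y : P)
    (g : Subgroup.normalizer (P : Set G)) :
    Commute (σ g) (∑ τ : automizer P, Polynomial.aeval (σ ((τ : MulAut P) y : G)) q) := by
  rw [commute_iff_eq, Finset.mul_sum, Finset.sum_mul]
  refine Fintype.sum_equiv (Equiv.mulLeft ⟨P.normalizerMonoidHom g, g, rfl⟩) _ _
    fun τ => semiconjBy_aeval ?_ q
  exact map_mul_map_eq_of_mem_normalizer σ g _

variable [CharZero k] [IsAlgClosed k] [Group G] [Finite G] {P : Subgroup G}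
  (hTI : IsTrivialIntersection P (Subgroup.normalizer (P : Set G)))

section Separated

variable {U : Type*} [AddCommGroup U] [Module k U] [FiniteDimensional k U]
  {σ : Representation k G U} {R : Subalgebra O (Module.End k U)} {D : k}
  (hσR : ∀ g, σ g ∈ R) (hR : ∀ T ∈ R, IsIntegral O T)
  (hD : ∀ a : P →* kˣ, D • subgroupIdem σ P a ∈ R)

include hTI hσR hR hD

lemma areSeparated_of_invariant {S : Finset (P →* kˣ)}
    (hS : ∀ τ ∈ automizer P, ∀ c ∈ S, c.comp (τ : P →* P) ∈ S) {a b : P →* kˣ} (ha : a ∈ S)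
    (hb : b ∉ S) (gap : O.valuation (Nat.card P : k) < O.valuation D ^ 2) :
    AreSeparated σ P a b := by
  refine areSeparated_of_valuation_lt Subgroup.le_normalizer hTI
    (w := D • ∑ c ∈ S, subgroupIdem σ P c) (c := D) (d := 0)
    (fun g hg => (commute_sum_charIdem σ hS ⟨g, hg⟩).smul_right D) hσR hR ?_ ?_ ?_ (hD a) (hD b) ?_
  · rw [Finset.smul_sum]
    exact sum_mem fun c _ => hD c
  · rw [smul_mul_assoc, Finset.sum_mul, Finset.sum_eq_single_of_mem a ha fun c _ hca =>
      charIdem_mul_charIdem_of_ne _ hca, isIdempotentElem_charIdem]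
  · rw [smul_mul_assoc, Finset.sum_mul, Finset.sum_eq_zero fun c hc =>
      charIdem_mul_charIdem_of_ne _ fun h : c = b => hb (h ▸ hc), smul_zero, zero_smul]
  · rwa [sub_zero, ← sq, map_pow]

/- With `q` the product of the `X - l(τ y)` over the automizer, the element `∑_τ q(σ(τ y))` kills
the `l`-part and acts on the fixed points of `P` by a scalar that `p / D` does not divide. -/
lemma areSeparated_one_of_prime_card (hO : O.valuation (p : k) < 1) (hζ : IsPrimitiveRoot ζ p)
    (hP : Nat.card P = p) (card_lt : Nat.card (automizer P) < p) {l : P →* kˣ} (hl : l ≠ 1)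
    (gap : O.valuation (p : k) <
      O.valuation D * O.valuation (1 - ζ) ^ Nat.card (automizer P)) :
    AreSeparated σ P 1 l := by
  cases nonempty_fintype (automizer P)
  have : Nontrivial P := Finite.one_lt_card_iff_nontrivial.mp (hP ▸ (Fact.out : p.Prime).one_lt)
  obtain ⟨y, hy⟩ := exists_ne (1 : P)
  let q : Polynomial O := ∏ τ : automizer P, (Polynomial.X - Polynomial.C
    ⟨l ((τ : MulAut P) y), (O.valuation_le_one_iff _).mp (valuation_character_eq_one O l _).le⟩)
  have aeval_q (c : k) : Polynomial.aeval c q = ∏ τ : automizer P, (c - l ((τ : MulAut P) y)) := by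
    simp only [q, map_prod, map_sub, Polynomial.aeval_X, Polynomial.aeval_C]
    rfl
  let w := ∑ τ : automizer P, Polynomial.aeval (σ ((τ : MulAut P) y : G)) q
  have aeval_mul_idem (a : P →* kˣ) (x : P) : Polynomial.aeval (σ (x : G)) q * subgroupIdem σ P a =
      Polynomial.aeval (a x : k) q • subgroupIdem σ P a :=
    aeval_mul_of_mul_eq_smul (map_mul_charIdem (σ.comp P.subtype) a x) q
  refine areSeparated_of_valuation_lt Subgroup.le_normalizer hTI (w := w)
    (c := Nat.card (automizer P) * Polynomial.aeval (1 : k) q) (d := 0)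
    (fun g hg => commute_sum_aeval σ q y ⟨g, hg⟩) hσR hR (sum_mem fun τ _ => ?_) ?_ ?_ (hD 1)
    (hD l) ?_
  · exact Algebra.adjoin_le (Set.singleton_subset_iff.mpr (hσR _))
      (Polynomial.aeval_mem_adjoin_singleton O _)
  · simp only [w, Finset.sum_mul, aeval_mul_idem, MonoidHom.one_apply, Units.val_one,
      Finset.sum_const, Finset.card_univ, mul_smul, Nat.cast_smul_eq_nsmul,
      Nat.card_eq_fintype_card]
  · rw [Finset.sum_mul, zero_smul]
    refine Finset.sum_eq_zero fun τ _ => ?_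
    rw [aeval_mul_idem, aeval_q, Finset.prod_eq_zero (Finset.mem_univ τ) (sub_self _), zero_smul]
  · have coprime : (Nat.card (automizer P)).Coprime p :=
      (Nat.coprime_of_lt_prime Nat.card_pos.ne' card_lt Fact.out).symm
    have val_factor (τ : automizer P) :
        O.valuation (1 - l ((τ : MulAut P) y) : k) = O.valuation (1 - ζ) :=
      valuation_one_sub_eq O hζ
        (isPrimitiveRoot_apply_of_prime_card hP hl ((MulEquiv.map_ne_one_iff _).mpr hy))
    rwa [hP, sub_zero, map_mul, map_mul, valuation_natCast_eq_one O hO coprime, one_mul, aeval_q,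
      map_prod, Finset.prod_congr rfl fun τ _ => val_factor τ, Finset.prod_const, Finset.card_univ,
      ← Nat.card_eq_fintype_card]

end Separated

section Irreducible

variable {V : Type*} [AddCommGroup V] [Module k V] [FiniteDimensional k V]
  {ρ : Representation k G V}

omit [CharZero k] [IsAlgClosed k] [Finite G] [FiniteDimensional k V] in
lemma AreSeparated.subgroupIdem_eq_zero_or [ρ.IsIrreducible] {a b : P →* kˣ}
    (h : AreSeparated ρ P a b) : subgroupIdem ρ P a = 0 ∨ subgroupIdem ρ P b = 0 := by
  obtain ⟨T, comm, hTa, hTb⟩ := h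
  let T' := T.intertwiningMap_of_isIntertwiningMap ρ ρ fun g v =>
    LinearMap.congr_fun (comm g).eq.symm v
  rcases Representation.IsIrreducible.injective_or_eq_zero T' with inj | zero
  · refine .inl (LinearMap.ext fun u => inj ?_)
    exact (LinearMap.congr_fun hTa u).trans (map_zero T).symm
  · exact .inr (LinearMap.ext fun u => hTb u (DFunLike.congr_fun zero u))

variable [IsMulCommutative P]

omit [FiniteDimensional k V] in
lemma exists_mem_occurringChars_ne_one [Nontrivial P]
    (inj : Function.Injective (ρ.comp P.subtype)) :
    ∃ a ∈ occurringChars k (ρ.comp P.subtype), a ≠ 1 := by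
  by_contra! h
  obtain ⟨x, hx⟩ := exists_ne (1 : P)
  refine hx (inj ?_)
  rw [map_one]
  refine eq_of_forall_mul_charIdem_eq (k := k) (ρ.comp P.subtype) fun a => ?_
  rw [one_mul]
  by_cases ha : charIdem (ρ.comp P.subtype) a = 0
  · rw [ha, mul_zero]
  · rw [map_mul_charIdem, h a ha, MonoidHom.one_apply, Units.val_one, one_smul]

omit [FiniteDimensional k V] in
lemma apply_eq_self_of_charIdem_apply_eq_zero {σ : P →* Module.End k V} {u : V}
    (h : ∀ l : P →* kˣ, l ≠ 1 → charIdem σ l u = 0) (x : P) : σ x u = u := by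
  have := finite_characters k (P := P)
  cases nonempty_fintype (P →* kˣ)
  have one_part : charIdem σ (1 : P →* kˣ) u = u := by
    have sum_apply := LinearMap.congr_fun (sum_charIdem (k := k) σ) u
    rwa [LinearMap.sum_apply, Fintype.sum_eq_single (1 : P →* kˣ) h] at sum_apply
  have fixed : σ x * charIdem σ (1 : P →* kˣ) = charIdem σ (1 : P →* kˣ) := by
    simpa using map_mul_charIdem σ (1 : P →* kˣ) x
  rw [← one_part, ← Module.End.mul_apply, fixed]

omit [FiniteDimensional k V] in
lemma subgroupIdem_linHom_one_apply_map (y : P) :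
    subgroupIdem (ρ.linHom ρ) P (1 : P →* kˣ) (ρ y) = ρ y := by
  refine eq_of_forall_mul_charIdem_eq (k := k) (ρ.comp P.subtype) fun b => ?_
  have map_mul_idem : ρ y * subgroupIdem ρ P b = (b y : k) • subgroupIdem ρ P b :=
    map_mul_charIdem (ρ.comp P.subtype) b y
  rw [charIdem_linHom_apply_mul, one_mul b, mul_assoc, map_mul_idem, mul_smul_comm,
    isIdempotentElem_charIdem]

variable [ρ.IsIrreducible] (hO : O.valuation (p : k) < 1)

include hTI hO

lemma exists_automizer_comp_eq {f : ℕ} (hP : Nat.card P = p ^ f)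
    (gap : 2 * ((occurringChars k (ρ.comp P.subtype)).ncard - 1) < (p - 1) * f) {a b : P →* kˣ}
    (ha : a ∈ occurringChars k (ρ.comp P.subtype)) (hb : b ∈ occurringChars k (ρ.comp P.subtype)) :
    ∃ τ ∈ automizer P, a.comp (τ : P →* P) = b := by
  classical
  obtain ⟨ζ, hζ⟩ := HasEnoughRootsOfUnity.exists_primitiveRoot k p
  cases nonempty_fintype (automizer P)
  by_contra! hne
  have sep : AreSeparated ρ P a b := by
    refine areSeparated_of_invariant hTI (map_mem_imageOrder O ρ)
      (fun T hT => isIntegral_of_mem_imageOrder hT)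
      (pow_smul_charIdem_mem O (IsPGroup.of_card hP) hζ fun x => map_mem_imageOrder O ρ x)
      (S := Finset.univ.image fun τ : automizer P => a.comp ((τ : MulAut P) : P →* P))
      (fun τ hτ c hc => ?_) ?_ ?_ ?_
    · obtain ⟨υ, -, rfl⟩ := Finset.mem_image.mp hc
      exact Finset.mem_image.mpr ⟨υ * ⟨τ, hτ⟩, Finset.mem_univ _, rfl⟩
    · exact Finset.mem_image.mpr ⟨1, Finset.mem_univ _, rfl⟩
    · intro hc
      obtain ⟨τ, -, hτ⟩ := Finset.mem_image.mp hc
      exact hne τ τ.2 hτ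
    · rw [hP, map_pow, ← pow_mul, mul_comm]
      exact valuation_natCast_pow_lt_pow hO hζ gap
  exact sep.subgroupIdem_eq_zero_or.elim ha hb

lemma card_automizer_eq_ncard_occurringChars (inj : Function.Injective (ρ.comp P.subtype))
    (hP : Nat.card P = p) (dim : 2 * Module.finrank k V + 1 < p) :
    Nat.card (automizer P) = (occurringChars k (ρ.comp P.subtype)).ncard := by
  have : Nontrivial P := Finite.one_lt_card_iff_nontrivial.mp (hP ▸ (Fact.out : p.Prime).one_lt)
  obtain ⟨a, ha, ha1⟩ := exists_mem_occurringChars_ne_one inj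
  have orbit : Set.range (fun τ : automizer P => a.comp ((τ : MulAut P) : P →* P)) =
      occurringChars k (ρ.comp P.subtype) := by
    ext b
    constructor
    · rintro ⟨τ, rfl⟩
      exact comp_mem_occurringChars ρ τ.2 ha
    · intro hb
      have := ncard_occurringChars_le_finrank (k := k) (ρ.comp P.subtype)
      obtain ⟨τ, hτ, rfl⟩ := exists_automizer_comp_eq hTI hO (f := 1) (by rw [hP, pow_one])
        (by lia) ha hb
      exact ⟨⟨τ, hτ⟩, rfl⟩
  rw [← orbit, ← Nat.card_coe_set_eq, Nat.card_range_of_injective]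
  intro τ υ h
  refine Subtype.ext (MulEquiv.ext fun x => ?_)
  exact injective_of_prime_card hP ha1 (DFunLike.congr_fun h x)

lemma three_mul_card_automizer_le (inj : Function.Injective (ρ.comp P.subtype))
    (hP : Nat.card P = p) (dim : 2 * Module.finrank k V + 1 < p) :
    3 * Nat.card (automizer P) ≤ p - 1 := by
  have le_finrank : Nat.card (automizer P) ≤ Module.finrank k V :=
    (card_automizer_eq_ncard_occurringChars hTI hO inj hP dim).trans_le
      (ncard_occurringChars_le_finrank _)
  have dvd : Nat.card (automizer P) ∣ p - 1 := by
    have : IsCyclic P := isCyclic_of_prime_card hP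
    have := Subgroup.card_subgroup_dvd_card (automizer P)
    rwa [IsCyclic.card_mulAut, hP, Nat.totient_prime Fact.out] at this
  obtain ⟨m, hm⟩ := dvd
  have : 3 ≤ m := by
    by_contra! hlt
    have := Nat.mul_le_mul_left (Nat.card (automizer P)) (Nat.le_of_lt_succ hlt)
    lia
  rw [hm, mul_comm]
  exact Nat.mul_le_mul_left _ this

lemma areSeparated_linHom_one [Nontrivial P] (hPG : IsPGroup p P)
    (inj : Function.Injective (ρ.comp P.subtype)) (dim : 2 * Module.finrank k V + 1 < p)
    {l : P →* kˣ} (hl : l ≠ 1) : AreSeparated (ρ.linHom ρ) P 1 l := by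
  classical
  obtain ⟨ζ, hζ⟩ := HasEnoughRootsOfUnity.exists_primitiveRoot k p
  obtain ⟨f, f_pos, hP⟩ := hPG.nontrivial_iff_card.mp inferInstance
  have mem_order (g : G) : ρ.linHom ρ g ∈ imageOrder O (twoSidedHom ρ) :=
    map_mem_imageOrder O (twoSidedHom ρ) (g, g)
  have integral (T) (hT : T ∈ imageOrder O (twoSidedHom ρ)) : IsIntegral O T :=
    isIntegral_of_mem_imageOrder hT
  have denominator := sq_smul_charIdem_linHom_mem ρ
    (pow_smul_charIdem_mem O hPG hζ fun x : P => map_mem_imageOrder O ρ x)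
  have ncard_le := ncard_occurringChars_le_finrank (k := k) (ρ.comp P.subtype)
  obtain rfl | two_le_f : f = 1 ∨ 2 ≤ f := by lia
  · rw [pow_one] at hP
    have card_automizer := card_automizer_eq_ncard_occurringChars hTI hO inj hP dim
    have three_mul_le := three_mul_card_automizer_le hTI hO inj hP dim
    refine areSeparated_one_of_prime_card hTI mem_order integral denominator hO hζ hP (by lia) hl ?_
    rw [map_pow, map_pow, ← pow_mul, ← pow_add, card_automizer]
    simpa using valuation_natCast_pow_lt_pow hO hζ (f := 1) (by lia)
  · refine areSeparated_of_invariant hTI mem_order integral denominator (S := {1}) ?_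
      (Finset.mem_singleton_self 1) (by simpa using hl) ?_
    · intro τ _ c hc
      rw [Finset.mem_singleton.mp hc, MonoidHom.one_comp, Finset.mem_singleton]
    · rw [hP, map_pow, map_pow, ← pow_mul, ← pow_mul]
      refine valuation_natCast_pow_lt_pow hO hζ ?_
      have := Nat.mul_le_mul_left (p - 1) two_le_f
      lia

/- `ρ y` lies in the trivial `P`-part of `End V`, so an endomorphism separating that part from
another one kills all conjugates of `ρ y`. -/
theorem commute_map_conj_of_isTrivialIntersection [Nontrivial P] (hPG : IsPGroup p P)
    (inj : Function.Injective (ρ.comp P.subtype)) (dim : 2 * Module.finrank k V + 1 < p)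
    (x y : P) (g : G) : Commute (ρ x) (ρ (g * y * g⁻¹)) := by
  have linHom_apply (h h' : G) : ρ.linHom ρ h (ρ h') = ρ (h * h' * h⁻¹) := by
    rw [map_mul, map_mul]
    rfl
  have other_part (l : P →* kˣ) (hl : l ≠ 1) :
      subgroupIdem (ρ.linHom ρ) P l (ρ (g * y * g⁻¹)) = 0 := by
    obtain ⟨T, comm, hT1, hTl⟩ := areSeparated_linHom_one hTI hO hPG inj dim hl
    have apply_map : T (ρ y) = 0 := by
      rw [← subgroupIdem_linHom_one_apply_map, ← Module.End.mul_apply, hT1, LinearMap.zero_apply]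
    refine hTl _ ?_
    rw [← linHom_apply, ← Module.End.mul_apply, ← (comm g).eq, Module.End.mul_apply, apply_map,
      map_zero]
  have fixed : ρ (x * (g * y * g⁻¹) * (x : G)⁻¹) = ρ (g * y * g⁻¹) := by
    rw [← linHom_apply]
    exact apply_eq_self_of_charIdem_apply_eq_zero other_part x
  rw [commute_iff_eq, ← map_mul, ← inv_mul_cancel_right (_ * _) (x : G), map_mul, fixed]

end Irreducible

end TrivialIntersection

section PElement

variable {p : ℕ} {G H : Type*} [Group G] [Group H]

/-- A `p`-element of a group: an element whose order is a power of `p`. -/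
def IsPElement (p : ℕ) (x : G) : Prop :=
  ∃ i : ℕ, x ^ p ^ i = 1

lemma IsPElement.map {x : G} (hx : IsPElement p x) (f : G →* H) : IsPElement p (f x) := by
  obtain ⟨i, hi⟩ := hx
  exact ⟨i, by rw [← map_pow, hi, map_one]⟩

lemma IsPElement.conj {x : G} (hx : IsPElement p x) (g : G) : IsPElement p (g * x * g⁻¹) :=
  hx.map (MulAut.conj g).toMonoidHom

lemma isPElement_coe_iff {K : Subgroup G} {x : K} : IsPElement p (x : G) ↔ IsPElement p x := by
  simp only [IsPElement, ← Subgroup.coe_pow, OneMemClass.coe_eq_one]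

lemma IsPElement.isPGroup_zpowers {x : G} (hx : IsPElement p x) :
    IsPGroup p (Subgroup.zpowers x) := by
  rw [isPGroup_iff_pow_pow_eq_one]
  obtain ⟨i, hi⟩ := hx
  rintro ⟨_, m, rfl⟩
  refine ⟨i, Subtype.ext ?_⟩
  change (x ^ m) ^ p ^ i = 1
  rw [← zpow_natCast, zpow_comm, zpow_natCast, hi, _root_.one_zpow]

lemma isPElement_of_mem {P : Subgroup G} (hP : IsPGroup p P) {x : G} (hx : x ∈ P) :
    IsPElement p x := by
  obtain ⟨i, hi⟩ := isPGroup_iff_pow_pow_eq_one.mp hP ⟨x, hx⟩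
  exact ⟨i, congrArg Subtype.val hi⟩

lemma IsPElement.exists_pow_eq {x : G} (hx : IsPElement p x) {n : ℕ} (hn : p.Coprime n) :
    ∃ y, IsPElement p y ∧ y ^ n = x := by
  obtain ⟨y, hy⟩ := (hx.isPGroup_zpowers.powEquiv hn).surjective ⟨x, Subgroup.mem_zpowers x⟩
  exact ⟨y, isPElement_of_mem hx.isPGroup_zpowers y.2, congrArg Subtype.val hy⟩

lemma IsPElement.eq_one_of_pow_eq_one {x : G} (hx : IsPElement p x) {n : ℕ} (hn : p.Coprime n)
    (h : x ^ n = 1) : x = 1 := by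
  obtain ⟨i, hi⟩ := hx
  simpa [Nat.Coprime.pow_left i hn] using (pow_gcd_eq_one (m := p ^ i) (n := n)).mpr ⟨hi, h⟩

/-- Two `p`-elements commute as soon as they commute with a common nontrivial `p`-element. -/
def IsPCommutingTransitive (p : ℕ) (G : Type*) [Group G] : Prop :=
  ∀ ⦃q x y : G⦄, IsPElement p q → IsPElement p x → IsPElement p y → q ≠ 1 →
    Commute x q → Commute y q → Commute x y

variable (P : Sylow p G)

lemma mem_sylow_of_mem_normalizer {z : G} (hz : IsPElement p z)
    (hzN : z ∈ Subgroup.normalizer (P : Set G)) : z ∈ P := by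
  have hmem : z ∈ Subgroup.zpowers z ⊓ (P : Subgroup G) := by
    rw [← hz.isPGroup_zpowers.inf_normalizer_sylow P]
    exact ⟨Subgroup.mem_zpowers z, hzN⟩
  exact hmem.2

variable [Fact p.Prime] [Finite G] {P} (h : IsPCommutingTransitive p G)

include h

lemma IsPCommutingTransitive.commute_of_mem_sylow {a b : G} (ha : a ∈ P) (hb : b ∈ P) :
    Commute a b := by
  rcases subsingleton_or_nontrivial P with _ | _
  · rw [show a = b from congrArg Subtype.val (Subsingleton.elim (⟨a, ha⟩ : P) ⟨b, hb⟩)]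
  obtain ⟨⟨q, hq⟩, hq1⟩ := @exists_ne _ P.isPGroup'.center_nontrivial 1
  have central (z : P) : Commute (z : G) q :=
    congrArg Subtype.val (Subgroup.mem_center_iff.mp hq z)
  exact h (isPElement_of_mem P.isPGroup' q.2) (isPElement_of_mem P.isPGroup' ha)
    (isPElement_of_mem P.isPGroup' hb) (fun hq' => hq1 (Subtype.ext (Subtype.ext hq')))
    (central ⟨a, ha⟩) (central ⟨b, hb⟩)

lemma IsPCommutingTransitive.mem_sylow_of_commute {q z : G} (hq : q ∈ P) (hq1 : q ≠ 1)
    (hz : IsPElement p z) (hzq : Commute z q) : z ∈ P := by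
  refine mem_sylow_of_mem_normalizer P hz (Subgroup.mem_normalizer_fintype fun b hb => ?_)
  have hzb : Commute z b := h (isPElement_of_mem P.isPGroup' hq) hz
    (isPElement_of_mem P.isPGroup' hb) hq1 hzq (h.commute_of_mem_sylow hb hq)
  rwa [hzb.eq, mul_inv_cancel_right]

lemma IsPCommutingTransitive.isTrivialIntersection_sylow :
    IsTrivialIntersection (P : Subgroup G) (Subgroup.normalizer (P : Set G)) := by
  intro g hg x hx hxN
  by_contra hx1
  have hxP : g⁻¹ * x * g ∈ P := by
    refine mem_sylow_of_mem_normalizer P ?_ hxN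
    simpa using (isPElement_of_mem P.isPGroup' hx).conj g⁻¹
  refine hg (Subgroup.mem_normalizer_fintype fun b hb => ?_)
  refine h.mem_sylow_of_commute hx hx1 ((isPElement_of_mem P.isPGroup' hb).conj g) ?_
  simpa [mul_assoc] using ((h.commute_of_mem_sylow hb hxP).map (MulAut.conj g).toMonoidHom)

end PElement

section LinearAlgebra

lemma eq_one_of_pow_eq_one_of_sub_one_mul_self {A : Type*} [Ring A] [IsAddTorsionFree A] {c : A}
    {m : ℕ} (hm : m ≠ 0) (h : c ^ m = 1) (hc : (c - 1) * (c - 1) = 0) : c = 1 := by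
  have mul_sub : c * (c - 1) = c - 1 := by
    rwa [sub_mul, one_mul, sub_eq_zero] at hc
  have pow_mul_sub (i : ℕ) : c ^ i * (c - 1) = c - 1 := by
    induction i with
    | zero => rw [pow_zero, one_mul]
    | succ i ih => rw [pow_succ, mul_assoc, mul_sub, ih]
  have sum := geom_sum_mul c m
  simp only [Finset.sum_mul, pow_mul_sub, h, sub_self, Finset.sum_const, Finset.card_range] at sum
  exact sub_eq_zero.mp ((smul_eq_zero_iff_right hm).mp sum)

lemma finrank_range_lt_of_isIdempotentElem {k V : Type*} [Field k] [AddCommGroup V] [Module k V]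
    [FiniteDimensional k V] {e : Module.End k V} (he : IsIdempotentElem e) (h1 : e ≠ 1) :
    Module.finrank k (LinearMap.range e) < Module.finrank k V := by
  refine Submodule.finrank_lt fun htop => h1 (LinearMap.ext fun u => ?_)
  obtain ⟨u', rfl⟩ : u ∈ LinearMap.range e := htop ▸ Submodule.mem_top
  rw [← Module.End.mul_apply, he.eq, Module.End.one_apply]

end LinearAlgebra

section Representation

variable {k G V : Type*} [Field k] [Group G] [AddCommGroup V] [Module k V]
  (ρ : Representation k G V)

lemma commute_of_commute_subrepresentation_quotient [CharZero k] [Finite G]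
    (W : Subrepresentation ρ) {x y : G}
    (sub : Commute (W.toRepresentation x) (W.toRepresentation y))
    (quot : Commute (ρ.quotient W.toSubmodule W.apply_mem_toSubmodule x)
      (ρ.quotient W.toSubmodule W.apply_mem_toSubmodule y)) :
    Commute (ρ x) (ρ y) := by
  have : IsAddTorsionFree (Module.End k V) := .of_isTorsionFree k _
  set c := x * y * (y * x)⁻¹ with hc
  have comm_mem (u : V) : ρ x (ρ y u) - ρ y (ρ x u) ∈ W.toSubmodule :=
    (Submodule.Quotient.eq _).mp (LinearMap.congr_fun quot.eq (W.toSubmodule.mkQ u))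
  have comm_eq {u : V} (hu : u ∈ W.toSubmodule) : ρ x (ρ y u) = ρ y (ρ x u) :=
    congrArg Subtype.val (LinearMap.congr_fun sub.eq ⟨u, hu⟩)
  have sub_one (u : V) :
      (ρ c - 1) u = ρ x (ρ y (ρ (y * x)⁻¹ u)) - ρ y (ρ x (ρ (y * x)⁻¹ u)) := by
    simp [hc]
  have hρc : ρ c = 1 := by
    refine eq_one_of_pow_eq_one_of_sub_one_mul_self (m := Nat.card G) Nat.card_pos.ne' ?_ ?_
    · rw [← map_pow, pow_card_eq_one', map_one]
    · ext u
      rw [Module.End.mul_apply, sub_one, comm_eq, sub_self, LinearMap.zero_apply]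
      rw [sub_one]
      exact W.apply_mem_toSubmodule _ (comm_mem _)
  have split : x * y = c * (y * x) := by rw [hc, inv_mul_cancel_right]
  rw [commute_iff_eq, ← map_mul, split, map_mul, hρc, one_mul, map_mul]

/-- The range of an endomorphism commuting with a representation, as a subrepresentation. -/
def rangeSubrepresentation (e : Module.End k V) (he : ∀ g, Commute (ρ g) e) :
    Subrepresentation ρ where
  toSubmodule := LinearMap.range e
  apply_mem_toSubmodule := by
    rintro g _ ⟨u, rfl⟩
    exact ⟨ρ g u, (LinearMap.congr_fun (he g).eq u).symm⟩

lemma map_mul_map_mul_eq_of_commute {e : Module.End k V} {he : ∀ g, Commute (ρ g) e} {x y : G}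
    (h : Commute ((rangeSubrepresentation ρ e he).toRepresentation x)
      ((rangeSubrepresentation ρ e he).toRepresentation y)) :
    ρ x * ρ y * e = ρ y * ρ x * e := by
  ext u
  exact congrArg Subtype.val (LinearMap.congr_fun h.eq ⟨e u, u, rfl⟩)

lemma exists_subrepresentation_of_not_isIrreducible [Nontrivial V] (h : ¬ ρ.IsIrreducible) :
    ∃ W : Subrepresentation ρ, W.toSubmodule ≠ ⊥ ∧ W.toSubmodule ≠ ⊤ := by
  by_contra! hW
  have : Nontrivial (Subrepresentation ρ) :=
    ⟨⊥, ⊤, fun hbt => bot_ne_top (congrArg Subrepresentation.toSubmodule hbt)⟩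
  exact h ⟨fun W => or_iff_not_imp_left.mpr fun hne =>
    Subrepresentation.toSubmodule_injective
      (hW W fun hbot => hne (Subrepresentation.toSubmodule_injective hbot))⟩

lemma nontrivial_of_isIrreducible [ρ.IsIrreducible] : Nontrivial V := by
  by_contra! h
  exact bot_ne_top (α := Subrepresentation ρ)
    (Subrepresentation.toSubmodule_injective (Subsingleton.elim _ _))

lemma isIrreducible_of_forall_exists_smul [Nontrivial V] [ρ.IsIrreducible] {H : Type*} [Group H]
    (τ : Representation k H V) (h : ∀ g, ∃ (x : H) (c : kˣ), τ x = (c : k) • ρ g) :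
    τ.IsIrreducible := by
  by_contra hτ
  obtain ⟨W, hbot, htop⟩ := exists_subrepresentation_of_not_isIrreducible τ hτ
  let W' : Subrepresentation ρ := ⟨W.toSubmodule, fun g v hv => by
    obtain ⟨x, c, hx⟩ := h g
    have := W.apply_mem_toSubmodule x hv
    rwa [hx, LinearMap.smul_apply, W.toSubmodule.smul_mem_iff c.ne_zero] at this⟩
  rcases eq_bot_or_eq_top W' with hW | hW
  · exact hbot (congrArg Subrepresentation.toSubmodule hW)
  · exact htop (congrArg Subrepresentation.toSubmodule hW)

variable {ρ}

lemma subgroupIdem_ne_one [FiniteDimensional k V] {p : ℕ}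
    (inj : Function.Injective ρ) (det : ∀ g, LinearMap.det (ρ g) = 1)
    (dim : p.Coprime (Module.finrank k V)) {Q : Subgroup G} [Finite Q] [Nontrivial Q]
    (hQ : IsPGroup p Q) (a : Q →* kˣ) : subgroupIdem ρ Q a ≠ 1 := by
  intro ha
  obtain ⟨x, hx⟩ := exists_ne (1 : Q)
  have scalar : ρ x = (a x : k) • 1 := by
    have smul_idem : ρ x * subgroupIdem ρ Q a = (a x : k) • subgroupIdem ρ Q a :=
      map_mul_charIdem (ρ.comp Q.subtype) a x
    rwa [ha, mul_one] at smul_idem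
  have char_one : a x = 1 := by
    refine ((isPElement_coe_iff.mp (isPElement_of_mem hQ x.2)).map a).eq_one_of_pow_eq_one dim
      (Units.ext ?_)
    simpa [scalar] using det x
  rw [char_one, Units.val_one, one_smul, ← map_one ρ] at scalar
  exact hx (Subtype.ext (inj scalar))

end Representation

section UnimodularGroup

variable {k G V : Type*} [Field k] [Group G] [AddCommGroup V] [Module k V]
  (ρ : Representation k G V)

/-- The homomorphism `(c, g) ↦ c • ρ g`. -/
def scaledHom : kˣ × G →* (Module.End k V)ˣ :=
  MonoidHom.toHomUnits
    { toFun := fun x => (x.1 : k) • ρ x.2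
      map_one' := by simp
      map_mul' := fun x y => by
        rw [Prod.fst_mul, Prod.snd_mul, Units.val_mul, map_mul, smul_mul_smul_comm] }

lemma val_scaledHom (c : kˣ) (g : G) : (scaledHom ρ (c, g) : Module.End k V) = (c : k) • ρ g :=
  rfl

/-- The group of all scalar multiples of the `ρ g` that have determinant one. -/
noncomputable def unimodularGroup : Subgroup (Module.End k V)ˣ :=
  (scaledHom ρ).range ⊓ (Units.map LinearMap.det).ker

/-- The tautological representation of `unimodularGroup ρ`. -/
noncomputable def unimodularRep : Representation k (unimodularGroup ρ) V :=
  (Units.coeHom (Module.End k V)).comp (unimodularGroup ρ).subtype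

variable {ρ}

lemma injective_unimodularRep : Function.Injective (unimodularRep ρ) :=
  Units.val_injective.comp Subtype.val_injective

lemma det_unimodularRep (u : unimodularGroup ρ) : LinearMap.det (unimodularRep ρ u) = 1 :=
  congrArg Units.val u.2.2

lemma scaledHom_mem_unimodularGroup_iff {c : kˣ} {g : G} :
    scaledHom ρ (c, g) ∈ unimodularGroup ρ ↔
      (c : k) ^ Module.finrank k V * LinearMap.det (ρ g) = 1 := by
  rw [unimodularGroup, Subgroup.mem_inf, and_iff_right ⟨_, rfl⟩, MonoidHom.mem_ker, Units.ext_iff,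
    Units.coe_map, Units.val_one, val_scaledHom, LinearMap.det_smul]

lemma exists_scaledHom_mem_unimodularGroup [IsAlgClosed k] (dim : 0 < Module.finrank k V) (g : G) :
    ∃ c : kˣ, scaledHom ρ (c, g) ∈ unimodularGroup ρ := by
  set δ : kˣ := Units.map LinearMap.det (MonoidHom.toHomUnits ρ g)
  obtain ⟨z, hz⟩ := IsAlgClosed.exists_pow_nat_eq ((δ⁻¹ : kˣ) : k) dim
  have hz0 : z ≠ 0 := by
    rintro rfl
    exact Units.ne_zero _ (hz.symm.trans (zero_pow dim.ne'))
  refine ⟨Units.mk0 z hz0, scaledHom_mem_unimodularGroup_iff.mpr ?_⟩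
  rw [Units.val_mk0, hz]
  exact δ.inv_mul

lemma exists_isPElement_scaledHom_mem_unimodularGroup {p : ℕ}
    (dim : p.Coprime (Module.finrank k V)) {x : G} (hx : IsPElement p x) :
    ∃ c : kˣ, IsPElement p (c, x) ∧ scaledHom ρ (c, x) ∈ unimodularGroup ρ := by
  set δ : G →* kˣ := (Units.map LinearMap.det).comp (MonoidHom.toHomUnits ρ)
  have inv : IsPElement p (δ x)⁻¹ := by simpa using (hx.map δ).map (invMonoidHom : kˣ →* kˣ)
  obtain ⟨c, hc, hcδ⟩ := inv.exists_pow_eq dim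
  refine ⟨c, ?_, scaledHom_mem_unimodularGroup_iff.mpr ?_⟩
  · obtain ⟨i, hi⟩ := hx
    obtain ⟨j, hj⟩ := hc
    refine ⟨i + j, Prod.ext ?_ ?_⟩
    · simp [pow_add, mul_comm (p ^ i), pow_mul, hj]
    · simp [pow_add, pow_mul, hi]
  · rw [← Units.val_pow_eq_pow_val, hcδ]
    exact (δ x).inv_mul

lemma finite_unimodularGroup [Finite G] (dim : 0 < Module.finrank k V) :
    Finite (unimodularGroup ρ) := by
  set m := Nat.card G * Module.finrank k V with hm
  have : NeZero m := ⟨Nat.mul_ne_zero Nat.card_pos.ne' dim.ne'⟩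
  have finite_roots : (rootsOfUnity m k : Set kˣ).Finite :=
    inferInstanceAs (Finite (rootsOfUnity m k))
  refine ((finite_roots.prod Set.finite_univ).image (scaledHom ρ)).subset ?_
  rintro u ⟨⟨⟨c, g⟩, rfl⟩, hdet⟩
  refine ⟨(c, g), ⟨?_, Set.mem_univ g⟩, rfl⟩
  have hcard := congrArg (· ^ Nat.card G)
    (scaledHom_mem_unimodularGroup_iff.mp ⟨⟨(c, g), rfl⟩, hdet⟩)
  simp only [mul_pow, ← map_pow, pow_card_eq_one', map_one, mul_one, one_pow, ← pow_mul] at hcard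
  refine (mem_rootsOfUnity _ _).mpr (Units.ext ?_)
  rwa [hm, mul_comm, Units.val_pow_eq_pow_val]

lemma isIrreducible_unimodularRep [IsAlgClosed k] [FiniteDimensional k V] [Nontrivial V]
    [ρ.IsIrreducible] : (unimodularRep ρ).IsIrreducible := by
  refine isIrreducible_of_forall_exists_smul ρ _ fun g => ?_
  obtain ⟨c, hc⟩ := exists_scaledHom_mem_unimodularGroup (ρ := ρ) Module.finrank_pos g
  exact ⟨⟨_, hc⟩, c, rfl⟩

end UnimodularGroup

section FeitThompson

universe u

/-- In finite linear groups of degree `n`, any two `p`-elements commute. -/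
def PElementsCommute (k : Type*) [Field k] (p n : ℕ) : Prop :=
  ∀ (V G : Type u) [AddCommGroup V] [Module k V] [FiniteDimensional k V] [Group G] [Finite G]
    (ρ : Representation k G V), Module.finrank k V = n →
    ∀ x y : G, IsPElement p x → IsPElement p y → Commute (ρ x) (ρ y)

variable {k : Type*} [Field k] [CharZero k] {V G : Type u} [AddCommGroup V] [Module k V]
  [FiniteDimensional k V] [Group G] [Finite G] {ρ : Representation k G V} {p : ℕ}
  (ih : ∀ m < Module.finrank k V, PElementsCommute.{u} k p m)

include ih

lemma commute_of_subrepresentation (W : Subrepresentation ρ) (hbot : W.toSubmodule ≠ ⊥)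
    (htop : W.toSubmodule ≠ ⊤) {x y : G} (hx : IsPElement p x) (hy : IsPElement p y) :
    Commute (ρ x) (ρ y) := by
  have pos : 0 < Module.finrank k W.toSubmodule :=
    Nat.pos_of_ne_zero fun h => hbot (Submodule.finrank_eq_zero.mp h)
  have add := W.toSubmodule.finrank_quotient_add_finrank
  exact commute_of_commute_subrepresentation_quotient ρ W
    (ih _ (Submodule.finrank_lt htop) _ _ _ rfl x y hx hy)
    (ih _ (by omega) _ _ (ρ.quotient W.toSubmodule W.apply_mem_toSubmodule) rfl x y hx hy)

variable [IsAlgClosed k] (inj : Function.Injective ρ)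
  (det : ∀ g, LinearMap.det (ρ g) = 1)

include inj det

lemma isPCommutingTransitive (dim : p.Coprime (Module.finrank k V)) :
    IsPCommutingTransitive p G := by
  intro q x y hq hx hy hq1 hxq hyq
  set Q := Subgroup.zpowers q
  have : Nontrivial Q := ⟨⟨q, Subgroup.mem_zpowers q⟩, 1, fun h => hq1 (congrArg Subtype.val h)⟩
  set C := Subgroup.centralizer {q}
  have mem_C {z : G} (hz : Commute z q) : z ∈ C := Subgroup.mem_centralizer_singleton_iff.mpr hz
  have commute_idem (a : Q →* kˣ) (z : C) :
      Commute (ρ.comp C.subtype z) (subgroupIdem ρ Q a : Module.End k V) := by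
    refine commute_charIdem a ?_
    rintro ⟨_, m, rfl⟩
    have hz : Commute (z : G) q := Subgroup.mem_centralizer_singleton_iff.mp z.2
    exact (hz.zpow_right m).map ρ
  refine inj ?_
  rw [map_mul, map_mul]
  refine eq_of_forall_mul_charIdem_eq (k := k) (ρ.comp Q.subtype) fun a => ?_
  have hlt := finrank_range_lt_of_isIdempotentElem (isIdempotentElem_charIdem _ a)
    (subgroupIdem_ne_one inj det dim hq.isPGroup_zpowers a)
  exact map_mul_map_mul_eq_of_commute (ρ.comp C.subtype) (he := commute_idem a)
    (ih _ hlt _ _ _ rfl ⟨x, mem_C hxq⟩ ⟨y, mem_C hyq⟩ (isPElement_coe_iff.mp hx)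
      (isPElement_coe_iff.mp hy))

variable [Fact p.Prime] (dim : 2 * Module.finrank k V + 1 < p) [ρ.IsIrreducible]

include dim

lemma commute_of_isIrreducible {x y : G} (hx : IsPElement p x) (hy : IsPElement p y) :
    Commute x y := by
  obtain ⟨P⟩ : Nonempty (Sylow p G) := inferInstance
  have coprime : p.Coprime (Module.finrank k V) := by
    have := nontrivial_of_isIrreducible ρ
    exact Nat.coprime_of_lt_prime Module.finrank_pos.ne' (by omega) Fact.out
  have trans := isPCommutingTransitive ih inj det coprime
  have : IsMulCommutative P :=
    ⟨⟨fun a b => Subtype.ext (trans.commute_of_mem_sylow a.2 b.2)⟩⟩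
  have normal (g : G) : g ∈ Subgroup.normalizer (P : Set G) := by
    refine Subgroup.mem_normalizer_fintype fun b hb => ?_
    rcases subsingleton_or_nontrivial P with _ | _
    · rw [show b = 1 from congrArg Subtype.val (Subsingleton.elim (⟨b, hb⟩ : P) 1), mul_one,
        mul_inv_cancel]
      exact P.one_mem
    obtain ⟨O, hO⟩ := exists_valuationSubring_natCast_lt_one (K := k) p
    obtain ⟨⟨q, hq⟩, hq1⟩ := exists_ne (1 : P)
    have commute_conj := commute_map_conj_of_isTrivialIntersection
      trans.isTrivialIntersection_sylow hO P.isPGroup' (inj.comp Subtype.val_injective) dim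
      ⟨q, hq⟩ ⟨b, hb⟩ g
    refine trans.mem_sylow_of_commute hq (fun h => hq1 (Subtype.ext h))
      ((isPElement_of_mem P.isPGroup' hb).conj g) (inj ?_)
    simpa only [map_mul] using commute_conj.symm.eq
  exact trans.commute_of_mem_sylow (mem_sylow_of_mem_normalizer P hx (normal x))
    (mem_sylow_of_mem_normalizer P hy (normal y))

omit ih inj det dim [ρ.IsIrreducible]

variable (k p) in
theorem pElementsCommute (n : ℕ) (hn : 2 * n + 1 < p) : PElementsCommute.{u} k p n := by
  induction n using Nat.strong_induction_on with
  | _ n ih =>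
  rintro V G _ _ _ _ _ ρ rfl x y hx hy
  have ih' (m : ℕ) (hm : m < Module.finrank k V) : PElementsCommute k p m :=
    ih m hm (by omega)
  rcases subsingleton_or_nontrivial V with _ | _
  · exact Subsingleton.elim _ _
  by_cases irr : ρ.IsIrreducible
  · have dim : 0 < Module.finrank k V := Module.finrank_pos
    have coprime : p.Coprime (Module.finrank k V) :=
      Nat.coprime_of_lt_prime dim.ne' (by omega) Fact.out
    have := finite_unimodularGroup (ρ := ρ) dim
    have := isIrreducible_unimodularRep (ρ := ρ)
    obtain ⟨c, hc, hcx⟩ := exists_isPElement_scaledHom_mem_unimodularGroup (ρ := ρ) coprime hx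
    obtain ⟨d, hd, hdy⟩ := exists_isPElement_scaledHom_mem_unimodularGroup (ρ := ρ) coprime hy
    have commute_scaled := (commute_of_isIrreducible ih' injective_unimodularRep
      det_unimodularRep hn (x := ⟨_, hcx⟩) (y := ⟨_, hdy⟩)
      (isPElement_coe_iff.mp (hc.map _)) (isPElement_coe_iff.mp (hd.map _))).map (unimodularRep ρ)
    have : Commute ((c : k) • ρ x) ((d : k) • ρ y) := commute_scaled
    rwa [Commute.smul_left_iff₀ c.ne_zero, Commute.smul_right_iff₀ d.ne_zero] at this
  · obtain ⟨W, hbot, htop⟩ := exists_subrepresentation_of_not_isIrreducible ρ irr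
    exact commute_of_subrepresentation ih' W hbot htop hx hy

end FeitThompson

section RowPower

variable {ι R : Type*} [Fintype ι] [CommRing R] {p : ℕ}

/-- The product of the `(p - 1)`-st powers of the linear forms `∑ⱼ Aᵢⱼ Xⱼ` given by the rows of
`A`. -/
noncomputable def rowPower (p : ℕ) (A : Matrix ι ι R) : MvPolynomial ι R :=
  ∏ i, A.toMvPolynomial i ^ (p - 1)

/-- The exponent all of whose entries are `p - 1`. -/
noncomputable def topExponent (ι : Type*) [Finite ι] (p : ℕ) : ι →₀ ℕ :=
  Finsupp.equivFunOnFinite.symm fun _ => p - 1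

/-- The ideal generated by the `p`-th powers of the variables. -/
noncomputable def powIdeal (ι R : Type*) [CommRing R] (p : ℕ) : Ideal (MvPolynomial ι R) :=
  Ideal.span (Set.range fun i => X i ^ p)

omit [Fintype ι] in
lemma mem_powIdeal_iff {f : MvPolynomial ι R} :
    f ∈ powIdeal ι R p ↔ ∀ s ∈ f.support, ∃ i, p ≤ s i := by
  have range_eq : Set.range (fun i : ι => (X i ^ p : MvPolynomial ι R)) =
      (fun s => monomial s 1) '' Set.range fun i => Finsupp.single i p := by
    simp only [X_pow_eq_monomial, ← Set.range_comp, Function.comp_def]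
  simp [powIdeal, range_eq, mem_ideal_span_monomial_image]

omit [Fintype ι] in
lemma coeff_topExponent_of_mem_powIdeal [Finite ι] (hp : 0 < p) {f : MvPolynomial ι R}
    (hf : f ∈ powIdeal ι R p) : coeff (topExponent ι p) f = 0 := by
  by_contra h
  obtain ⟨_, hi⟩ := mem_powIdeal_iff.mp hf _ (mem_support_iff.mpr h)
  exact (Nat.pred_lt hp.ne').not_ge hi

lemma sub_mem_powIdeal_of_isHomogeneous {f : MvPolynomial ι R}
    (hf : f.IsHomogeneous (Fintype.card ι * (p - 1))) :
    f - monomial (topExponent ι p) (coeff (topExponent ι p) f) ∈ powIdeal ι R p := by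
  classical
  refine mem_powIdeal_iff.mpr fun s hs => ?_
  by_contra! small
  rw [mem_support_iff, coeff_sub, coeff_monomial] at hs
  have ne_top : topExponent ι p ≠ s := by
    rintro rfl
    simp at hs
  rw [if_neg ne_top, sub_zero] at hs
  have le (i : ι) : s i ≤ p - 1 := Nat.le_sub_one_of_lt (small i)
  have degree : ∑ i, s i = ∑ _ : ι, (p - 1) := by
    rw [← Finsupp.degree_eq_sum, Finset.sum_const, Finset.card_univ, smul_eq_mul]
    by_contra h
    exact hs (hf.coeff_eq_zero h)
  exact ne_top (Finsupp.ext fun i =>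
    (((Finset.sum_eq_sum_iff_of_le fun i _ => le i).mp degree) i (Finset.mem_univ i)).symm)

lemma isHomogeneous_rowPower (A : Matrix ι ι R) :
    (rowPower p A).IsHomogeneous (Fintype.card ι * (p - 1)) := by
  have := IsHomogeneous.prod Finset.univ (fun i => A.toMvPolynomial i ^ (p - 1)) (fun _ => p - 1)
    fun i _ => by simpa using (A.toMvPolynomial_isHomogeneous i).pow (p - 1)
  simpa [rowPower] using this

lemma map_rowPower {S : Type*} [CommRing S] (φ : R →+* S) (A : Matrix ι ι R) :
    map φ (rowPower p A) = rowPower p (A.map φ) := by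
  simp only [rowPower, map_prod, map_pow, toMvPolynomial_map]

lemma bind₁_rowPower (A B : Matrix ι ι R) :
    bind₁ B.toMvPolynomial (rowPower p A) = rowPower p (A * B) := by
  simp only [rowPower, map_prod, map_pow, toMvPolynomial_mul]

lemma bind₁_mem_powIdeal [Fact p.Prime] [CharP R p] (A : Matrix ι ι R) {f : MvPolynomial ι R}
    (hf : f ∈ powIdeal ι R p) : bind₁ A.toMvPolynomial f ∈ powIdeal ι R p := by
  suffices (powIdeal ι R p).map (bind₁ A.toMvPolynomial) ≤ powIdeal ι R p from
    this (Ideal.mem_map_of_mem _ hf)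
  rw [powIdeal, Ideal.map_span, Ideal.span_le]
  rintro _ ⟨_, ⟨i, rfl⟩, rfl⟩
  rw [SetLike.mem_coe, map_pow, bind₁_X_right, toMvPolynomial, sum_pow_char]
  refine Ideal.sum_mem _ fun j _ => ?_
  rw [← C_mul_X_eq_monomial, mul_pow]
  exact Ideal.mul_mem_left _ _ (Ideal.subset_span ⟨j, rfl⟩)

/-- The coefficient of `∏ⱼ Xⱼ ^ (p - 1)` in `rowPower p A`. -/
noncomputable def topCoeff (p : ℕ) (A : Matrix ι ι R) : R :=
  coeff (topExponent ι p) (rowPower p A)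

lemma map_topCoeff {S : Type*} [CommRing S] (φ : R →+* S) (A : Matrix ι ι R) :
    φ (topCoeff p A) = topCoeff p (A.map φ) := by
  rw [topCoeff, topCoeff, ← map_rowPower, coeff_map]

variable [DecidableEq ι]

lemma rowPower_diagonal (d : ι → R) :
    rowPower p (diagonal d) = monomial (topExponent ι p) ((∏ i, d i) ^ (p - 1)) := by
  have form (i : ι) : (diagonal d).toMvPolynomial i = C (d i) * X i := by
    rw [toMvPolynomial, Fintype.sum_eq_single i fun j hj => by
      rw [diagonal_apply_ne' _ hj, map_zero], diagonal_apply_eq, C_mul_X_eq_monomial]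
  simp only [rowPower, form, mul_pow, Finset.prod_mul_distrib, ← map_pow, ← map_prod]
  rw [monomial_eq, Finsupp.prod_fintype _ _ fun _ => pow_zero _]
  simp [topExponent, Finset.prod_pow]

lemma topCoeff_diagonal (d : ι → R) : topCoeff p (diagonal d) = (diagonal d).det ^ (p - 1) := by
  rw [topCoeff, rowPower_diagonal, coeff_monomial, if_pos rfl, det_diagonal]

variable [Fact p.Prime] [CharP R p]

omit [DecidableEq ι] in
lemma topCoeff_mul (A B : Matrix ι ι R) : topCoeff p (A * B) = topCoeff p A * topCoeff p B := by
  classical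
  have hp : 0 < p := (Fact.out : p.Prime).pos
  have top_eq : rowPower p (1 : Matrix ι ι R) = monomial (topExponent ι p) 1 := by
    rw [← diagonal_one, rowPower_diagonal, Finset.prod_const_one, one_pow]
  have congr := bind₁_mem_powIdeal B (sub_mem_powIdeal_of_isHomogeneous
    (isHomogeneous_rowPower (p := p) A))
  rw [map_sub, bind₁_rowPower, ← mul_one (coeff _ _), ← C_mul_monomial, ← top_eq, map_mul,
    bind₁_rowPower, one_mul, bind₁_C_right] at congr
  simpa [coeff_C_mul, sub_eq_zero, topCoeff] using coeff_topExponent_of_mem_powIdeal hp congr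

lemma topCoeff_transvection [IsReduced R] (t : TransvectionStruct ι R) :
    topCoeff p t.toMatrix = 1 := by
  have topCoeff_one : topCoeff p (1 : Matrix ι ι R) = 1 := by
    rw [← diagonal_one, topCoeff_diagonal, diagonal_one, det_one, one_pow]
  have pow_eq_one : t.toMatrix ^ p = 1 := by
    obtain ⟨i, j, hij, c⟩ := t
    have : Nonempty ι := ⟨i⟩
    have sq : (single i j c) ^ 2 = 0 := by rw [sq, single_mul_single_of_ne _ _ _ _ hij.symm]
    rw [TransvectionStruct.toMatrix_mk, transvection,
      add_pow_char_of_commute p (Commute.one_left _), one_pow,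
      pow_eq_zero_of_le (Fact.out : p.Prime).two_le sq, add_zero]
  have pow : topCoeff p t.toMatrix ^ p = 1 := by
    rw [← topCoeff_one, ← pow_eq_one]
    exact (map_pow (MonoidHom.mk ⟨topCoeff p, topCoeff_one⟩ topCoeff_mul) _ _).symm
  refine sub_eq_zero.mp (pow_eq_zero_iff (Fact.out : p.Prime).ne_zero |>.mp ?_)
  rw [sub_pow_char, pow, one_pow, sub_self]

end RowPower

section CharP

variable {ι K : Type*} [Fintype ι] [DecidableEq ι] [Field K] {p : ℕ} [Fact p.Prime] [CharP K p]

lemma topCoeff_eq_det_pow (A : Matrix ι ι K) :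
    topCoeff p A = A.det ^ (p - 1) := by
  induction A using diagonal_transvection_induction with
  | hdiag d _ => exact topCoeff_diagonal d
  | htransvec t => rw [topCoeff_transvection, t.det, one_pow]
  | hmul A B ihA ihB => rw [topCoeff_mul, ihA, ihB, det_mul, mul_pow]

/- Modulo `p` and the `p`-th powers of the variables, each summand becomes `∏ⱼ Xⱼ ^ (p - 1)`. -/
lemma sum_rowPower_ne_zero {R T : Type*} [CommRing R] [Fintype T] (π : R →+* K)
    {A : T → Matrix ι ι R} (det : ∀ t, (A t).det = 1) (card : ¬ p ∣ Fintype.card T) :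
    ∑ t, rowPower p (A t) ≠ 0 := by
  intro h
  have topCoeff_eq (t : T) : π (topCoeff p (A t)) = 1 := by
    have det_map : ((A t).map π).det = 1 := by
      rw [← RingHom.mapMatrix_apply, ← RingHom.map_det, det, map_one]
    rw [map_topCoeff, topCoeff_eq_det_pow, det_map, one_pow]
  have sum_eq := congrArg (fun f => π (coeff (topExponent ι p) f)) h
  simp only [coeff_sum, map_sum, coeff_zero, map_zero] at sum_eq
  change ∑ t, π (topCoeff p (A t)) = 0 at sum_eq
  rw [Fintype.sum_congr _ _ topCoeff_eq, Finset.sum_const, nsmul_one, Finset.card_univ,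
    CharP.cast_eq_zero_iff K p] at sum_eq
  exact card sum_eq

end CharP

section Lattice

variable {k V ι T : Type*} [Field k] [AddCommGroup V] [Module k V] [Fintype ι]

lemma det_update_eq_repr_mul_det [DecidableEq ι] (b e : Module.Basis ι k V) (i : ι) (w : V) :
    b.det (Function.update e i w) = e.repr w i * b.det e := by
  conv_lhs => rw [← e.sum_repr w]
  rw [AlternatingMap.map_update_sum, Fintype.sum_eq_single i fun j hj => by
    rw [AlternatingMap.map_update_smul, AlternatingMap.map_update_self _ _ hj.symm, smul_zero],
    AlternatingMap.map_update_smul, Function.update_eq_self, smul_eq_mul]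

omit [Fintype ι] in
/- Choose the basis of maximal determinant and apply Cramer's rule. -/
lemma exists_basis_forall_repr_mem [Finite ι] (O : ValuationSubring k) [Finite T] (f : T → V)
    (b : Module.Basis ι k V) (hb : ∀ i, b i ∈ Set.range f) :
    ∃ e : Module.Basis ι k V, (∀ i, e i ∈ Set.range f) ∧ ∀ t i, e.repr (f t) i ∈ O := by
  classical
  cases nonempty_fintype ι
  choose s₀ hs₀ using hb
  have : Nonempty (ι → T) := ⟨s₀⟩
  obtain ⟨s, max⟩ := Finite.exists_max fun s : ι → T => O.valuation (b.det (f ∘ s))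
  have det_ne : b.det (f ∘ s) ≠ 0 := by
    intro h
    have := max s₀
    rw [show f ∘ s₀ = b from funext hs₀, h, b.det_self, map_one, map_zero] at this
    exact one_ne_zero (le_zero_iff.mp this)
  obtain ⟨indep, span⟩ := b.is_basis_iff_det.mpr det_ne.isUnit
  set e : Module.Basis ι k V := Module.Basis.mk indep span.ge
  have he : (e : ι → V) = f ∘ s := Module.Basis.coe_mk _ _
  refine ⟨e, fun i => ⟨s i, (congrFun he i).symm⟩, fun t i => ?_⟩
  have le := max (Function.update s i t)
  rw [Function.comp_update, ← he, det_update_eq_repr_mul_det, map_mul] at le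
  rw [← he] at det_ne
  rw [← O.valuation_le_one_iff]
  exact le_of_mul_le_mul_right (le.trans_eq (one_mul _).symm)
    (zero_lt_iff.mpr (O.valuation.ne_zero_iff.mpr det_ne))

lemma exists_basis_forall_toMatrix_mem [DecidableEq ι] {G : Type*} [Group G] [Finite G]
    (O : ValuationSubring k) (ρ : Representation k G V) (b : Module.Basis ι k V) :
    ∃ e : Module.Basis ι k V, ∀ g i j, LinearMap.toMatrix e e (ρ g) i j ∈ O := by
  obtain ⟨e, he, mem⟩ := exists_basis_forall_repr_mem O (fun t : G × ι => ρ t.1 (b t.2)) b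
    fun i => ⟨(1, i), by simp⟩
  refine ⟨e, fun g i j => ?_⟩
  obtain ⟨⟨h, l⟩, eq⟩ := he j
  have : ρ g (e j) = ρ (g * h) (b l) := by rw [← eq, map_mul, Module.End.mul_apply]
  rw [LinearMap.toMatrix_apply, this]
  exact mem (g * h, l) i

lemma charP_residueField (O : ValuationSubring k) {p : ℕ} [Fact p.Prime]
    (hO : O.valuation (p : k) < 1) : CharP (IsLocalRing.ResidueField O) p := by
  rw [CharP.charP_iff_prime_eq_zero Fact.out, ← map_natCast (IsLocalRing.residue O),
    IsLocalRing.residue_eq_zero_iff]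
  exact (O.valuation_lt_one_iff (p : O)).mpr (by simpa using hO)

variable {G : Type*} [Group G] [Fintype G]

lemma exists_sum_prod_repr_pow_ne_zero [CharZero k] (ρ : Representation k G V) {p : ℕ}
    [Fact p.Prime] (b : Module.Basis ι k V) (det : ∀ g, LinearMap.det (ρ g) = 1)
    (card : ¬ p ∣ Fintype.card G) :
    ∃ (e : Module.Basis ι k V) (v : V), ∑ g, ∏ i, e.repr (ρ g v) i ^ (p - 1) ≠ 0 := by
  classical
  obtain ⟨O, hO⟩ := exists_valuationSubring_natCast_lt_one (K := k) p
  obtain ⟨e, he⟩ := exists_basis_forall_toMatrix_mem O ρ b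
  have := charP_residueField O hO
  let A (g : G) : Matrix ι ι O := Matrix.of fun i j => ⟨_, he g i j⟩
  have map_A (g : G) : (A g).map O.subtype = LinearMap.toMatrix e e (ρ g) := rfl
  have det_A (g : G) : (A g).det = 1 := by
    apply O.subtype_injective
    rw [RingHom.map_det, RingHom.mapMatrix_apply, map_A, LinearMap.det_toMatrix, det, map_one]
  have ne_zero : MvPolynomial.map O.subtype (∑ g, rowPower p (A g)) ≠ 0 :=
    (map_ne_zero_iff _ (MvPolynomial.map_injective _ O.subtype_injective)).mpr
      (sum_rowPower_ne_zero (IsLocalRing.residue O) det_A card)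
  refine ⟨e, ?_⟩
  by_contra! vanish
  refine ne_zero (MvPolynomial.funext fun x => ?_)
  rw [map_zero, ← vanish (e.equivFun.symm x), map_sum, map_sum]
  refine Finset.sum_congr rfl fun g _ => ?_
  have repr_symm : e.repr (e.equivFun.symm x) = x := e.equivFun.apply_symm_apply x
  rw [map_rowPower, map_A, rowPower, map_prod]
  refine Finset.prod_congr rfl fun i _ => ?_
  rw [map_pow, toMvPolynomial_eval_eq_apply, ← LinearMap.toMatrix_mulVec_repr e e, repr_symm]

end Lattice

section LinearForms

variable {k V W : Type*} [Field k] [AddCommGroup V] [Module k V] [AddCommGroup W] [Module k W]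

lemma prod_mem_pow_card_mul {A T : Type*} [CommRing A] [Algebra k A] (M : Submodule k A)
    (s : Finset T) {f : T → A} {d : ℕ} (hf : ∀ t ∈ s, f t ∈ M ^ d) :
    ∏ t ∈ s, f t ∈ M ^ (s.card * d) := by
  classical
  induction s using Finset.induction_on with
  | empty => simp [Submodule.one_le.mp le_rfl]
  | insert a s ha ih =>
    rw [Finset.prod_insert ha, Finset.card_insert_of_notMem ha, add_one_mul, add_comm, pow_add]
    rw [Finset.forall_mem_insert] at hf
    exact Submodule.mul_mem_mul hf.1 (ih hf.2)

variable (k V) in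
/-- The linear forms on `V`, as a space of functions, so that `linearForms k V ^ d` is the space of
homogeneous polynomial functions of degree `d` on `V`. -/
def linearForms : Submodule k (V → k) :=
  LinearMap.range (LinearMap.ltoFun k V k k)

lemma coe_mem_linearForms (l : Module.Dual k V) : (l : V → k) ∈ linearForms k V :=
  ⟨l, rfl⟩

variable {d : ℕ} {f : V → k}

lemma comp_mem_linearForms_pow (T : W →ₗ[k] V) (hf : f ∈ linearForms k V ^ d) :
    f ∘ T ∈ linearForms k W ^ d := by
  induction hf using Submodule.pow_induction_on_left' with
  | algebraMap c => exact Submodule.algebraMap_mem c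
  | add f g _ _ _ hf hg => exact add_mem hf hg
  | mem_mul _ hl _ _ _ hf =>
    obtain ⟨l, rfl⟩ := hl
    rw [Nat.succ_eq_add_one, pow_succ']
    exact Submodule.mul_mem_mul (coe_mem_linearForms (l ∘ₗ T)) hf

lemma apply_smul_of_mem_linearForms_pow (hf : f ∈ linearForms k V ^ d) (c : k) (v : V) :
    f (c • v) = c ^ d * f v := by
  induction hf using Submodule.pow_induction_on_left' with
  | algebraMap a => simp
  | add f g _ _ _ hf hg => rw [Pi.add_apply, Pi.add_apply, hf, hg, mul_add]
  | mem_mul _ hl _ _ _ hf =>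
    obtain ⟨l, rfl⟩ := hl
    rw [Pi.mul_apply, Pi.mul_apply, hf, LinearMap.ltoFun_apply, map_smul, smul_eq_mul,
      Nat.succ_eq_add_one]
    ring

lemma exists_isHomogeneous_eval_eq {ι : Type*} [Finite ι] {f : (ι → k) → k}
    (hf : f ∈ linearForms k (ι → k) ^ d) :
    ∃ F : MvPolynomial ι k, F.IsHomogeneous d ∧ ∀ v, eval v F = f v := by
  classical
  cases nonempty_fintype ι
  induction hf using Submodule.pow_induction_on_left' with
  | algebraMap c => exact ⟨C c, isHomogeneous_C _ _, fun v => by simp⟩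
  | add f g _ _ _ hf hg =>
    obtain ⟨F, hF, eval_F⟩ := hf
    obtain ⟨F', hF', eval_F'⟩ := hg
    exact ⟨F + F', hF.add hF', fun v => by rw [map_add, eval_F, eval_F', Pi.add_apply]⟩
  | mem_mul _ hl d _ _ hf =>
    obtain ⟨l, rfl⟩ := hl
    obtain ⟨F, hF, eval_F⟩ := hf
    refine ⟨(∑ i, C (l fun j => if i = j then 1 else 0) * X i) * F, ?_, fun v => ?_⟩
    · rw [Nat.succ_eq_add_one, add_comm]
      exact (IsHomogeneous.sum _ _ _ fun i _ => isHomogeneous_C_mul_X _ _).mul hF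
    · simp [eval_F, l.pi_apply_eq_sum_univ v, mul_comm]

end LinearForms

section SemiInvariant

variable {k G V : Type*} [Field k] [Group G] [AddCommGroup V] [Module k V]

/-- `f` is a semi-invariant of `ρ`: each `ρ g` multiplies it by a scalar. -/
def IsSemiInvariant (ρ : Representation k G V) (f : V → k) : Prop :=
  ∀ g, ∃ c : k, ∀ v, f (ρ g v) = c * f v

lemma IsSemiInvariant.apply_eq {ρ : Representation k G V} {f : V → k}
    (hf : IsSemiInvariant ρ f) (f_ne : f ≠ 0) (hχ : ∀ χ : G →* kˣ, χ = 1) (g : G) (v : V) :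
    f (ρ g v) = f v := by
  choose χ apply_eq using hf
  obtain ⟨w, hw⟩ := Function.ne_iff.mp f_ne
  let χHom : G →* k :=
    { toFun := χ
      map_one' := mul_right_cancel₀ hw (by rw [← apply_eq, map_one, Module.End.one_apply, one_mul])
      map_mul' := fun g h => mul_right_cancel₀ hw (by
        rw [← apply_eq, map_mul, Module.End.mul_apply, apply_eq, apply_eq, mul_assoc]) }
  have χ_one : χ g = 1 := congrArg Units.val (DFunLike.congr_fun (hχ χHom.toHomUnits) g)
  rw [apply_eq, χ_one, one_mul]

/-- `ρ` has a nonzero semi-invariant that is homogeneous of positive degree at most `4 (dim V)²`.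
This weakening of Thompson's bound is amenable to induction on the dimension. -/
def HasBoundedSemiInvariant (ρ : Representation k G V) : Prop :=
  ∃ d, 0 < d ∧ d ≤ 4 * Module.finrank k V ^ 2 ∧
    ∃ f ∈ linearForms k V ^ d, f ≠ 0 ∧ IsSemiInvariant ρ f

lemma hasBoundedSemiInvariant_of_unimodularRep [IsAlgClosed k] {ρ : Representation k G V}
    (dim : 0 < Module.finrank k V) (h : HasBoundedSemiInvariant (unimodularRep ρ)) :
    HasBoundedSemiInvariant ρ := by
  obtain ⟨d, pos, le, f, hf, f_ne, semi⟩ := h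
  refine ⟨d, pos, le, f, hf, f_ne, fun g => ?_⟩
  obtain ⟨c, hc⟩ := exists_scaledHom_mem_unimodularGroup (ρ := ρ) dim g
  obtain ⟨χ, hχ⟩ := semi ⟨_, hc⟩
  refine ⟨((c : k) ^ d)⁻¹ * χ, fun v => ?_⟩
  have scaled : f ((c : k) • ρ g v) = χ * f v := hχ v
  rw [mul_assoc, ← scaled, apply_smul_of_mem_linearForms_pow hf,
    inv_mul_cancel_left₀ (pow_ne_zero _ c.ne_zero)]

lemma hasBoundedSemiInvariant_of_not_dvd_card [CharZero k] [FiniteDimensional k V] [Finite G]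
    {ρ : Representation k G V} {p : ℕ} [Fact p.Prime] (det : ∀ g, LinearMap.det (ρ g) = 1)
    (dim : 0 < Module.finrank k V) (le : p ≤ 4 * Module.finrank k V + 1)
    (card : ¬ p ∣ Nat.card G) : HasBoundedSemiInvariant ρ := by
  cases nonempty_fintype G
  rw [Nat.card_eq_fintype_card] at card
  obtain ⟨e, v, hv⟩ := exists_sum_prod_repr_pow_ne_zero ρ (Module.finBasis k V) det card
  have two_le : 2 ≤ p := (Fact.out : p.Prime).two_le
  refine ⟨Module.finrank k V * (p - 1), Nat.mul_pos dim (by omega), ?_,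
    ∑ g, ∏ i, (e.coord i ∘ₗ ρ g : V → k) ^ (p - 1), Submodule.sum_mem _ fun g _ => ?_, ?_,
    fun h => ⟨1, fun v => ?_⟩⟩
  · calc Module.finrank k V * (p - 1) ≤ Module.finrank k V * (4 * Module.finrank k V) := by
          gcongr; omega
      _ = 4 * Module.finrank k V ^ 2 := by ring
  · simpa using prod_mem_pow_card_mul (linearForms k V) Finset.univ fun i _ =>
      Submodule.pow_mem_pow _ (coe_mem_linearForms (e.coord i ∘ₗ ρ g)) (p - 1)
  · exact fun h => hv (by simpa using congrFun h v)
  · simp only [Finset.sum_apply, Finset.prod_apply, Pi.pow_apply, one_mul]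
    refine Fintype.sum_equiv (Equiv.mulRight h) _ _ fun g => ?_
    simp

end SemiInvariant

section Imprimitive

variable {k G V : Type*} [Field k] [Group G] [AddCommGroup V] [Module k V]

/-- An idempotent `e` projecting onto a block of imprimitivity of `ρ`: each translate of the block
is either the block itself, or a complementary one that `e` annihilates. -/
structure IsBlockIdem (ρ : Representation k G V) (e : Module.End k V) : Prop where
  isIdempotentElem : IsIdempotentElem e
  commute_or_eq_zero : ∀ g, Commute (ρ g) e ∨ e * ρ g * e = 0

lemma isBlockIdem_subgroupIdem [CharZero k] (ρ : Representation k G V) (Q : Subgroup G) [Q.Normal]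
    [Finite Q] (a : Q →* kˣ) : IsBlockIdem ρ (subgroupIdem ρ Q a) where
  isIdempotentElem := isIdempotentElem_charIdem _ _
  commute_or_eq_zero g := by
    set b : Q →* kˣ := a.comp (MulAut.conjNormal g⁻¹ : Q ≃* Q) with hb
    have comp_conj : b.comp (MulAut.conjNormal g : Q ≃* Q) = a := by
      ext x
      simp [hb]
    have conj : ρ g * subgroupIdem ρ Q a = subgroupIdem ρ Q b * ρ g := by
      rw [← comp_conj]
      exact charIdem_comp_mul _ _ _ b fun x => by simp [← map_mul]
    by_cases hab : a = b
    · rw [← hab] at conj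
      exact .inl conj
    · right
      rw [mul_assoc, conj, ← mul_assoc, charIdem_mul_charIdem_of_ne _ hab, zero_mul]

/-- The stabilizer of the block onto which `e` projects. -/
def blockStabilizer (ρ : Representation k G V) (e : Module.End k V) : Subgroup G where
  carrier := {g | Commute (ρ g) e}
  one_mem' := by simp
  mul_mem' {g h} hg hh := by
    rw [Set.mem_ofPred_eq, map_mul]
    exact hg.mul_left hh
  inv_mem' {g} hg := Commute.units_inv_left (u := ρ.toHomUnits g) hg

/-- The representation of the stabilizer of a block on that block. -/
def blockRep (ρ : Representation k G V) (e : Module.End k V) :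
    Representation k (blockStabilizer ρ e) (LinearMap.range e) :=
  (rangeSubrepresentation (ρ.comp (blockStabilizer ρ e).subtype) e fun g => g.2).toRepresentation

/-- The projection onto the block `c` followed by its identification with the base block. -/
noncomputable def blockProj (ρ : Representation k G V) (e : Module.End k V)
    (c : G ⧸ blockStabilizer ρ e) : V →ₗ[k] LinearMap.range e :=
  e.rangeRestrict ∘ₗ ρ c.out⁻¹

variable {ρ : Representation k G V} {e : Module.End k V}

lemma mul_map_mul_eq_zero (he : IsBlockIdem ρ e) {c c' : G ⧸ blockStabilizer ρ e} (h : c ≠ c') :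
    e * ρ (c.out⁻¹ * c'.out) * e = 0 := by
  refine (he.commute_or_eq_zero _).resolve_left fun hmem => h ?_
  rw [← c.out_eq', ← c'.out_eq']
  exact QuotientGroup.eq.mpr hmem

lemma blockProj_map_coe (he : IsBlockIdem ρ e) (c c' : G ⧸ blockStabilizer ρ e)
    (w : LinearMap.range e) [Decidable (c = c')] :
    blockProj ρ e c (ρ c'.out w) = if c = c' then w else 0 := by
  obtain ⟨_, u, rfl⟩ := w
  apply Subtype.ext
  change (e * ρ c.out⁻¹ * ρ c'.out * e) u = _
  split_ifs with h
  · rw [h, mul_assoc e, ← map_mul, inv_mul_cancel, map_one, mul_one, he.isIdempotentElem.eq]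
  · rw [mul_assoc e, ← map_mul, mul_map_mul_eq_zero he h]
    rfl

lemma exists_forall_blockProj_eq [Finite G] (he : IsBlockIdem ρ e) :
    ∃ S : (G ⧸ blockStabilizer ρ e → LinearMap.range e) →ₗ[k] V,
      ∀ w c, blockProj ρ e c (S w) = w c := by
  classical
  cases nonempty_fintype (G ⧸ blockStabilizer ρ e)
  refine ⟨∑ c, (ρ c.out ∘ₗ (LinearMap.range e).subtype) ∘ₗ LinearMap.proj c, fun w c => ?_⟩
  simp [blockProj_map_coe he]

lemma index_mul_finrank_range_le [Finite G] [FiniteDimensional k V] (he : IsBlockIdem ρ e) :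
    (blockStabilizer ρ e).index * Module.finrank k (LinearMap.range e) ≤ Module.finrank k V := by
  cases nonempty_fintype (G ⧸ blockStabilizer ρ e)
  obtain ⟨S, hS⟩ := exists_forall_blockProj_eq he
  have inj : Function.Injective S := fun w w' h => funext fun c => by rw [← hS w, h, hS]
  have le := LinearMap.finrank_le_finrank_of_injective inj
  rw [Module.finrank_pi_fintype, Finset.sum_const, Finset.card_univ, smul_eq_mul] at le
  rwa [Subgroup.index_eq_card, Nat.card_eq_fintype_card]

lemma exists_blockProj_map (g : G) (c : G ⧸ blockStabilizer ρ e) :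
    ∃ h, ∀ v, blockProj ρ e c (ρ g v) = blockRep ρ e h (blockProj ρ e (g⁻¹ • c) v) := by
  have mem : c.out⁻¹ * (g * (g⁻¹ • c).out) ∈ blockStabilizer ρ e := by
    rw [← QuotientGroup.eq, QuotientGroup.out_eq', ← smul_eq_mul, ← MulAction.Quotient.smul_coe,
      QuotientGroup.out_eq', smul_inv_smul]
  refine ⟨⟨_, mem⟩, fun v => Subtype.ext ?_⟩
  change (e * ρ c.out⁻¹ * ρ g) v =
    (ρ (c.out⁻¹ * (g * (g⁻¹ • c).out)) * e * ρ (g⁻¹ • c).out⁻¹) v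
  have comm : Commute (ρ (c.out⁻¹ * (g * (g⁻¹ • c).out))) e := mem
  rw [comm.eq, mul_assoc, mul_assoc, ← map_mul, ← map_mul]
  simp only [mul_assoc, mul_inv_cancel, mul_one]

lemma isSemiInvariant_prod_blockProj [Fintype (G ⧸ blockStabilizer ρ e)]
    {f : LinearMap.range e → k} (hf : IsSemiInvariant (blockRep ρ e) f) :
    IsSemiInvariant ρ (∏ c, f ∘ blockProj ρ e c) := by
  intro g
  choose h hh using exists_blockProj_map (ρ := ρ) (e := e) g
  choose χ hχ using hf
  refine ⟨∏ c, χ (h c), fun v => ?_⟩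
  simp only [Finset.prod_apply, Function.comp_apply, hh, hχ, Finset.prod_mul_distrib]
  congr 1
  exact Fintype.prod_equiv (MulAction.toPerm g⁻¹) _ _ fun c => rfl

lemma hasBoundedSemiInvariant_of_blockRep [Finite G] [FiniteDimensional k V]
    (he : IsBlockIdem ρ e) (h : HasBoundedSemiInvariant (blockRep ρ e)) :
    HasBoundedSemiInvariant ρ := by
  cases nonempty_fintype (G ⧸ blockStabilizer ρ e)
  obtain ⟨d, pos, le, f, hf, f_ne, semi⟩ := h
  obtain ⟨S, hS⟩ := exists_forall_blockProj_eq he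
  obtain ⟨w, hw⟩ := Function.ne_iff.mp f_ne
  set r := (blockStabilizer ρ e).index with hr
  have card : Fintype.card (G ⧸ blockStabilizer ρ e) = r := by
    rw [hr, Subgroup.index_eq_card, Nat.card_eq_fintype_card]
  refine ⟨r * d, Nat.mul_pos (Nat.pos_of_ne_zero Subgroup.index_ne_zero_of_finite) pos, ?_,
    ∏ c, f ∘ blockProj ρ e c, ?_, Function.ne_iff.mpr ⟨S fun _ => w, ?_⟩,
    isSemiInvariant_prod_blockProj semi⟩
  · calc r * d ≤ r * r * (4 * Module.finrank k (LinearMap.range e) ^ 2) :=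
          Nat.mul_le_mul (Nat.le_mul_self r) le
      _ = 4 * (r * Module.finrank k (LinearMap.range e)) ^ 2 := by ring
      _ ≤ 4 * Module.finrank k V ^ 2 := by
          gcongr
          exact index_mul_finrank_range_le he
  · rw [← card, ← Finset.card_univ]
    exact prod_mem_pow_card_mul _ _ fun c _ => comp_mem_linearForms_pow _ hf
  · rw [Finset.prod_apply]
    refine Finset.prod_ne_zero_iff.mpr fun c _ => ?_
    rw [Function.comp_apply, hS]
    exact hw

end Imprimitive

section Existence

universe u

variable {k : Type*} [Field k] {G : Type u} [Group G] {p : ℕ}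

lemma exists_normal_isMulCommutative_isPGroup [Finite G] [Fact p.Prime]
    (comm : ∀ x y : G, IsPElement p x → IsPElement p y → Commute x y) (card : p ∣ Nat.card G) :
    ∃ Q : Subgroup G, Q.Normal ∧ IsMulCommutative Q ∧ IsPGroup p Q ∧ Nontrivial Q := by
  let Q : Subgroup G :=
    { carrier := {x | IsPElement p x}
      one_mem' := ⟨0, one_pow _⟩
      mul_mem' := by
        rintro x y ⟨i, hx⟩ ⟨j, hy⟩
        refine ⟨i + j, ?_⟩
        rw [(comm x y ⟨i, hx⟩ ⟨j, hy⟩).mul_pow, pow_add, pow_mul, hx, one_pow, mul_comm, pow_mul,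
          hy, one_pow, one_mul]
      inv_mem' := by
        rintro x ⟨i, hx⟩
        exact ⟨i, by rw [inv_pow, hx, inv_one]⟩ }
  obtain ⟨x, hx⟩ := exists_prime_orderOf_dvd_card' p card
  have hxp : IsPElement p x := ⟨1, by rw [pow_one, ← hx, pow_orderOf_eq_one]⟩
  refine ⟨Q, ⟨fun x hx g => IsPElement.conj hx g⟩,
    ⟨⟨fun x y => Subtype.ext (comm _ _ x.2 y.2)⟩⟩, fun x => ?_, ?_⟩
  · exact isPElement_coe_iff.mp x.2
  · refine Q.nontrivial_iff_exists_ne_one.mpr ⟨x, hxp, ?_⟩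
    rintro rfl
    exact (Fact.out : p.Prime).one_lt.ne (orderOf_one.symm.trans hx)

variable [CharZero k] [IsAlgClosed k] {V : Type u} [AddCommGroup V] [Module k V]
  [FiniteDimensional k V] [Finite G]

lemma hasBoundedSemiInvariant_of_dvd_card [Fact p.Prime] {ρ : Representation k G V}
    (ih : ∀ (W H : Type u) [AddCommGroup W] [Module k W] [FiniteDimensional k W] [Group H]
      [Finite H] (σ : Representation k H W), 0 < Module.finrank k W →
      Module.finrank k W < Module.finrank k V → HasBoundedSemiInvariant σ)
    (inj : Function.Injective ρ) (det : ∀ g, LinearMap.det (ρ g) = 1)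
    (pos : 0 < Module.finrank k V) (dim : 2 * Module.finrank k V + 1 < p)
    (card : p ∣ Nat.card G) : HasBoundedSemiInvariant ρ := by
  have : Nontrivial V := Module.finrank_pos_iff.mp pos
  obtain ⟨Q, _, _, hQ, _⟩ := exists_normal_isMulCommutative_isPGroup
    (fun x y hx hy => Commute.of_map inj (pElementsCommute k p _ dim V G ρ rfl x y hx hy)) card
  obtain ⟨a, ne_zero⟩ := exists_charIdem_ne_zero (k := k) (ρ.comp Q.subtype)
  have coprime : p.Coprime (Module.finrank k V) :=
    Nat.coprime_of_lt_prime pos.ne' (by omega) Fact.out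
  have block := isBlockIdem_subgroupIdem ρ Q a
  refine hasBoundedSemiInvariant_of_blockRep block (ih _ _ _ ?_ ?_)
  · rwa [Module.finrank_pos_iff, Submodule.nontrivial_iff_ne_bot, Ne, LinearMap.range_eq_bot]
  · exact finrank_range_lt_of_isIdempotentElem block.isIdempotentElem
      (subgroupIdem_ne_one inj det coprime hQ a)

theorem hasBoundedSemiInvariant (ρ : Representation k G V) (pos : 0 < Module.finrank k V) :
    HasBoundedSemiInvariant ρ := by
  induction hn : Module.finrank k V using Nat.strong_induction_on generalizing V G with
  | _ n ih =>
  have := finite_unimodularGroup (ρ := ρ) pos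
  refine hasBoundedSemiInvariant_of_unimodularRep pos ?_
  obtain ⟨p, prime, lt, le⟩ := Nat.exists_prime_lt_and_le_two_mul (2 * n + 1) (by omega)
  have : Fact p.Prime := ⟨prime⟩
  by_cases card : p ∣ Nat.card (unimodularGroup ρ)
  · subst hn
    exact hasBoundedSemiInvariant_of_dvd_card
      (fun W H _ _ _ _ _ σ pos lt => ih _ lt σ pos rfl)
      injective_unimodularRep det_unimodularRep pos lt card
  · have ne : p ≠ 2 * (2 * n + 1) := fun h => by
      have := (Nat.prime_dvd_prime_iff_eq Nat.prime_two prime).mp ⟨_, h⟩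
      omega
    exact hasBoundedSemiInvariant_of_not_dvd_card det_unimodularRep pos (by omega) card

end Existence

lemma eval_aeval_sum_smul_X {R m n : Type*} [CommSemiring R] [Fintype n] (A : Matrix m n R)
    (f : MvPolynomial m R) (v : n → R) :
    eval v (aeval (fun i => ∑ j, A i j • (X j : MvPolynomial n R)) f) = eval (A *ᵥ v) f := by
  induction f using MvPolynomial.induction_on with
  | C a => simp
  | add f g hf hg => rw [map_add, map_add, hf, hg, map_add]
  | mul_X f i hf =>
    rw [map_mul, map_mul, hf, aeval_X, map_sum, map_mul, eval_X]
    simp only [smul_eval, eval_X, Matrix.mulVec, dotProduct]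

end Thompson

theorem stmt14_general {ι k : Type*} [Fintype ι] [DecidableEq ι] [Nonempty ι] [Field k]
    [IsAlgClosed k] [CharZero k] (G : Subgroup (GL ι k)) [Finite G]
    (hχ : ∀ χ : G →* kˣ, χ = 1) :
    ∃ d, 0 < d ∧ d ≤ 4 * Fintype.card ι ^ 2 ∧
      ∃ f : MvPolynomial ι k, f ≠ 0 ∧ f.IsHomogeneous d ∧ ∀ g ∈ G,
        aeval (fun i => ∑ j, ((g⁻¹ : GL ι k) : Matrix ι ι k) i j • X j) f = f := by
  let ρ : Representation k G (ι → k) :=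
    (Matrix.toLinAlgEquiv' : Matrix ι ι k ≃ₐ[k] _).toMonoidHom.comp
      ((Units.coeHom _).comp G.subtype)
  obtain ⟨d, pos, le, f, hf, f_ne, semi⟩ := Thompson.hasBoundedSemiInvariant ρ (by
    rw [Module.finrank_fintype_fun_eq_card]
    exact Fintype.card_pos)
  obtain ⟨F, homogeneous, eval_F⟩ := Thompson.exists_isHomogeneous_eval_eq hf
  rw [Module.finrank_fintype_fun_eq_card] at le
  refine ⟨d, pos, le, F, ?_, homogeneous, fun g hg => MvPolynomial.funext fun v => ?_⟩
  · rintro rfl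
    exact f_ne (_root_.funext fun v => by rw [← eval_F, map_zero, Pi.zero_apply])
  · rw [Thompson.eval_aeval_sum_smul_X, eval_F, eval_F]
    exact semi.apply_eq f_ne hχ (⟨g, hg⟩⁻¹ : G) v

/-- Thompson's bound: if `G ≤ GL_n(ℂ)` is a finite subgroup with no non-trivial
characters (every homomorphism `G → ℂˣ` is trivial), then `G` has a nonzero homogeneous
invariant polynomial of degree `d` with `0 < d ≤ 4n²`. -/
theorem stmt14 {n : ℕ} (hn : 0 < n) (G : Subgroup (GL (Fin n) ℂ))
    (hfin : (G : Set (GL (Fin n) ℂ)).Finite)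
    (hchar : ∀ φ : G →* ℂˣ, φ = 1) :
    ∃ d : ℕ, 0 < d ∧ d ≤ 4 * n ^ 2 ∧
      ∃ f : MvPolynomial (Fin n) ℂ, f ≠ 0 ∧ f.IsHomogeneous d ∧
        ∀ g ∈ G, glAct g f = f := by
  have : Finite G := hfin
  have : Nonempty (Fin n) := ⟨⟨0, hn⟩⟩
  simpa only [Fintype.card_fin, glAct] using stmt14_general G hchar
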